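/- arXiv:2005.03183 — 3 statements merged into one kernel-verified Lean document; each statement's English description precedes it below -/
import Mathlib

section
/- Let m be a positive integer and q a prime power with 2m dividing q+1. Then the canonical additive character ψ of F_{q⁴} satisfies ψ(C_0^{(2m,q⁴)}) = (q²−1)/(2m) − q², and ψ(C_i^{(2m,q⁴)}) = (q²−1)/(2m) for all i with 1 ≤ i ≤ 2m−1. -/
open scoped Classical

noncomputable section

/-- The canonical additive character of a finite field `F` of characteristic `p`:
`ψ(x) = exp(2πi · Tr_{F/F_p}(x) / p)`. -/
def canChar (p : ℕ) (F : Type*) [Field F] [Fintype F] [Algebra (ZMod p) F] (x : F) : ℂ :=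
  Complex.exp (2 * Real.pi * Complex.I * ((Algebra.trace (ZMod p) F x).val : ℂ) / p)

/-- The cyclotomic class `C_i^{(N,q)} = ω^i ⟨ω^N⟩`. -/
def cycl {F : Type*} [Field F] [Fintype F] (ω : F) (N i : ℕ) : Finset F :=
  Finset.univ.filter fun x => ∃ k : ℕ, x = ω ^ (i + N * k)

theorem aux_char (p : ℕ) [Fact p.Prime] (F : Type*) [Field F] [Fintype F] [Algebra (ZMod p) F] :
    ∃ ψ : AddChar F ℂ, (∀ x, ψ x = canChar p F x) ∧ ψ.IsPrimitive ∧
      (∀ (f : ℕ) (x : F), ψ (x ^ p ^ f) = ψ x) ∧ (∀ x, ψ x ^ p = 1) := by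
  have : CharP F p := charP_of_injective_algebraMap (algebraMap (ZMod p) F).injective p
  refine ⟨(ZMod.stdAddChar (N := p)).compAddMonoidHom (Algebra.trace (ZMod p) F).toAddMonoidHom,
    ?_, ?_, ?_, ?_⟩
  · intro x
    simp only [AddChar.compAddMonoidHom_apply, canChar, ZMod.stdAddChar_apply, ZMod.toCircle_apply]
    simp
  · apply AddChar.IsPrimitive.of_ne_one
    obtain ⟨x, hx⟩ := Algebra.trace_surjective (ZMod p) F 1
    intro h
    have h1 := DFunLike.congr_fun h x
    simp only [AddChar.compAddMonoidHom_apply, LinearMap.toAddMonoidHom_coe, hx,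
      AddChar.one_apply] at h1
    have h2 : (ZMod.stdAddChar (1 : ZMod p)) = ZMod.stdAddChar (0 : ZMod p) := by
      rw [h1, AddChar.map_zero_eq_one]
    exact one_ne_zero (ZMod.injective_stdAddChar h2)
  · intro f x
    simp only [AddChar.compAddMonoidHom_apply, LinearMap.toAddMonoidHom_coe]
    congr 1
    induction f with
    | zero => simp
    | succ f ih =>
      rw [← ih, pow_succ, pow_mul]
      have := Algebra.trace_eq_of_algEquiv
        (FiniteField.frobeniusAlgEquivOfAlgebraic (ZMod p) F) (x ^ p ^ f)
      rw [← this]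
      simp [FiniteField.coe_frobeniusAlgEquivOfAlgebraic]
  · intro x
    rw [← AddChar.map_nsmul_eq_pow]
    simp

theorem aux_sq (p : ℕ) [Fact p.Prime] (hp : Odd p) (f : ℕ) (q : ℕ) (hq : q = p ^ f)
    {F : Type*} [Field F] [Fintype F] [CharP F p] (hcard : Fintype.card F = q ^ 4)
    (ψ : AddChar F ℂ) (hprim : ψ.IsPrimitive)
    (hfrob : ∀ x : F, ψ (x ^ q) = ψ x)
    (ε : F) (hε : ε ^ (q + 1) = -1) (a : F)
    (hW : ∀ x : F, a ^ q * x ^ (q ^ 2) + a * x = 0 → x = 0) :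
    (∑ x, ψ (a * x ^ (q + 1))) ^ 2 = (q : ℂ) ^ 4 := by
  have hε0 : ε ≠ 0 := by
    rintro rfl
    simp at hε
  have hadd : ∀ x y : F, (x + y) ^ q = x ^ q + y ^ q := by
    intro x y; rw [hq]; exact add_pow_char_pow x y p f
  have hneg : ∑ x, ψ (a * x ^ (q + 1)) = ∑ y, ψ (-(a * y ^ (q + 1))) := by
    rw [← Equiv.sum_comp (Equiv.mulLeft₀ ε hε0)]
    apply Finset.sum_congr rfl
    intro x _
    congr 1
    simp only [Equiv.mulLeft₀_apply, mul_pow, hε]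
    ring
  have hbij : Function.Bijective (fun x : F => x ^ q) := by
    rw [← Finite.injective_iff_bijective, hq]
    exact iterateFrobenius_inj F p f
  rw [pow_two]
  nth_rw 2 [hneg]
  rw [Finset.sum_mul_sum, Finset.sum_comm]
  have h1 : ∀ y : F, ∑ x, ψ (a * x ^ (q + 1)) * ψ (-(a * y ^ (q + 1))) =
      ∑ x, ψ (a * x ^ (q + 1)) * ψ (y ^ q * (a ^ q * x ^ (q ^ 2) + a * x)) := by
    intro y
    rw [← Equiv.sum_comp (Equiv.addRight y)]
    apply Finset.sum_congr rfl
    intro x _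
    have e1 : ψ (y ^ q * (a ^ q * x ^ (q ^ 2) + a * x))
        = ψ (a * x ^ q * y) * ψ (a * x * y ^ q) := by
      rw [← hfrob (a * x ^ q * y), ← AddChar.map_add_eq_mul]
      congr 1
      ring
    rw [e1, ← AddChar.map_add_eq_mul, ← AddChar.map_add_eq_mul, ← AddChar.map_add_eq_mul]
    congr 1
    simp only [Equiv.coe_addRight, pow_succ, hadd]
    ring
  simp_rw [h1]
  rw [Finset.sum_comm]
  have h2 : ∀ x : F, ∑ y, ψ (a * x ^ (q + 1)) * ψ (y ^ q * (a ^ q * x ^ (q ^ 2) + a * x)) =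
      if x = 0 then (q : ℂ) ^ 4 else 0 := by
    intro x
    rw [← Finset.mul_sum, hbij.sum_comp (fun z => ψ (z * (a ^ q * x ^ (q ^ 2) + a * x))),
      AddChar.sum_mulShift _ hprim]
    have hq0 : q ≠ 0 := by
      rw [hq]; exact pow_ne_zero _ (Fact.out : p.Prime).ne_zero
    by_cases hx : x = 0
    · simp [hx, hcard, hq0]
    · rw [if_neg (fun h => hx (hW x h)), if_neg hx]; simp
  simp_rw [h2]
  simp

theorem aux_split (h : ℕ → ℂ) (a b : ℕ) :
    ∑ k ∈ Finset.range (a * b), h k =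
      ∑ l ∈ Finset.range b, ∑ j ∈ Finset.range a, h (j + a * l) := by
  induction b with
  | zero => simp
  | succ b ih =>
    rw [Nat.mul_succ, Finset.sum_range_add, ih, Finset.sum_range_succ]
    congr 1
    apply Finset.sum_congr rfl
    intro j _
    rw [add_comm]

theorem aux_sign (q : ℕ) (hq : 3 ≤ q) (T : ℂ) (hT : IsIntegral ℤ T)
    (h : (1 + ((q : ℂ) + 1) * T) ^ 2 = (q : ℂ) ^ 4) : T = (q : ℂ) - 1 := by
  have hq1 : (q : ℂ) + 1 ≠ 0 := by exact_mod_cast Nat.succ_ne_zero q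
  have h1 : (((q : ℂ) + 1) * (T - (q - 1))) * (1 + ((q : ℂ) + 1) * T + q ^ 2) = 0 := by
    linear_combination h
  rcases mul_eq_zero.1 h1 with h2 | h2
  · rcases mul_eq_zero.1 h2 with h3 | h3
    · exact absurd h3 hq1
    · linear_combination h3
  · exfalso
    have hTq : T = algebraMap ℚ ℂ (-((q : ℚ) ^ 2 + 1) / (q + 1)) := by
      simp
      field_simp
      linear_combination h2
    rw [hTq, isIntegral_algebraMap_iff (algebraMap ℚ ℂ).injective] at hT
    obtain ⟨z, hz⟩ := IsIntegrallyClosed.isIntegral_iff.1 hT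
    have hq2 : (q : ℚ) + 1 ≠ 0 := by positivity
    have hz2 : (z : ℚ) * (q + 1) = -((q : ℚ) ^ 2 + 1) := by
      have : (z : ℚ) = -((q : ℚ) ^ 2 + 1) / (q + 1) := by simpa using hz
      rw [this]; field_simp
    have hz3 : z * ((q : ℤ) + 1) = -((q : ℤ) ^ 2 + 1) := by exact_mod_cast hz2
    have hd : ((q : ℤ) + 1) ∣ 2 := ⟨-z - (q - 1), by linear_combination hz3⟩
    have := Int.le_of_dvd (by norm_num) hd
    omega

theorem aux_T (p : ℕ) [Fact p.Prime] (hp : Odd p) (f : ℕ) (q : ℕ) (hq : q = p ^ f) (hq3 : 3 ≤ q)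
    {F : Type*} [Field F] [Fintype F] [CharP F p] (hcard : Fintype.card F = q ^ 4)
    (ψ : AddChar F ℂ) (hprim : ψ.IsPrimitive)
    (hfrob : ∀ x : F, ψ (x ^ q) = ψ x) (hint : ∀ x, ψ x ^ p = 1)
    (ω : F) (hω0 : ω ≠ 0) (hord : orderOf ω = q ^ 4 - 1)
    (hsum : ∀ g : F → ℂ, ∑ x, g x = g 0 + ∑ k ∈ Finset.range (q ^ 4 - 1), g (ω ^ k))
    (e : ℕ) (he : q ^ 4 - 1 = (q + 1) * e) (c : ℕ) (hc : c < q + 1) :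
    ∑ l ∈ Finset.range e, ψ (ω ^ (c + (q + 1) * l)) =
      if c = 0 then -1 - (q : ℂ) * (q - 1) else (q : ℂ) - 1 := by
  have hqodd : Odd q := by rw [hq]; exact hp.pow
  have hone : ω ^ ((q + 1) * e) = 1 := by rw [← he, ← hord, pow_orderOf_eq_one]
  have h4 : q ^ 4 = (q ^ 2 + 1) * (q - 1) * (q + 1) + 1 := by
    obtain ⟨r, rfl⟩ : ∃ r, q = r + 1 := ⟨q - 1, by omega⟩
    simp only [Nat.add_sub_cancel]; ring
  have hgen : ∀ c : ℕ, c ≠ 0 → c < q + 1 →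
      ∑ l ∈ Finset.range e, ψ (ω ^ (c + (q + 1) * l)) = (q : ℂ) - 1 := by
    intro c hc0 hc
    apply aux_sign q hq3
    · apply IsIntegral.sum
      intro l _
      exact IsIntegral.of_pow (Fact.out : p.Prime).pos (by rw [hint]; exact isIntegral_one)
    · have hS : ∑ x, ψ (ω ^ c * x ^ (q + 1)) =
          1 + ((q : ℂ) + 1) * ∑ l ∈ Finset.range e, ψ (ω ^ (c + (q + 1) * l)) := by
        rw [hsum]
        congr 1
        · simp
        · rw [he, mul_comm (q + 1) e, aux_split]
          rw [Finset.sum_congr rfl (g := fun _ => ∑ l ∈ Finset.range e, ψ (ω ^ (c + (q + 1) * l)))]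
          · simp
          · intro l _
            apply Finset.sum_congr rfl
            intro j _
            congr 1
            have : ω ^ (c + (q + 1) * j) = ω ^ (c + (q + 1) * j) * (ω ^ ((q + 1) * e)) ^ l := by
              rw [hone]; simp
            rw [this]
            ring
      rw [← hS]
      obtain ⟨s, hs⟩ := hqodd
      have hK : (q ^ 2 + 1) * s * (q + 1) * 2 = q ^ 4 - 1 := by
        rw [h4]
        have : q - 1 = 2 * s := by omega
        rw [this]; simp; ring
      have h2s : (ω ^ ((q ^ 2 + 1) * s * (q + 1))) ^ 2 = 1 := by
        rw [← pow_mul, hK, ← hord, pow_orderOf_eq_one]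
      have hneg1 : ω ^ ((q ^ 2 + 1) * s * (q + 1)) = -1 := by
        rcases (mul_self_eq_one_iff.1 ((pow_two _).symm.trans h2s)) with h | h
        · exfalso
          have := orderOf_dvd_of_pow_eq_one h
          rw [hord, ← hK] at this
          have hs0 : 0 < s := by omega
          have hpos : 0 < (q ^ 2 + 1) * s * (q + 1) := by positivity
          have := Nat.le_of_dvd hpos this
          omega
        · exact h
      refine aux_sq p hp f q hq hcard ψ hprim hfrob (ω ^ ((q ^ 2 + 1) * s))
        (by rw [← pow_mul]; exact hneg1) (ω ^ c) ?_
      intro x hx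
      by_contra hx0
      have hfermat : x ^ (q ^ 4 - 1) = 1 := by
        rw [← hcard]; exact FiniteField.pow_card_sub_one_eq_one x hx0
      have e1 : (ω ^ c) ^ (q - 1) * x ^ (q ^ 2 - 1) = -1 := by
        have hne : ω ^ c * x ≠ 0 := mul_ne_zero (pow_ne_zero _ hω0) hx0
        apply mul_right_cancel₀ hne
        have t1 : (ω ^ c) ^ q = (ω ^ c) ^ (q - 1) * ω ^ c := by
          rw [← pow_succ]; congr 1; omega
        have t2 : x ^ q ^ 2 = x ^ (q ^ 2 - 1) * x := by
          rw [← pow_succ]; congr 1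
          have : 0 < q ^ 2 := by positivity
          omega
        rw [t1, t2] at hx
        linear_combination hx
      have e2 : ω ^ (c * ((q - 1) * (q ^ 2 + 1))) = 1 := by
        have := congrArg (· ^ (q ^ 2 + 1)) e1
        simp only [mul_pow] at this
        have hev : Even (q ^ 2 + 1) := by
          rw [hs]; exact ⟨2 * s ^ 2 + 2 * s + 1, by ring⟩
        have h5 : (q ^ 2 - 1) * (q ^ 2 + 1) = q ^ 4 - 1 := by
          have := Nat.sq_sub_sq (q ^ 2) 1
          rw [mul_comm, ← this, ← pow_mul, one_pow]
        rw [hev.neg_one_pow, ← pow_mul x, h5, hfermat, mul_one, ← pow_mul, ← pow_mul] at this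
        rw [← this]
      have e3 := orderOf_dvd_of_pow_eq_one e2
      rw [hord] at e3
      have h6 : q ^ 4 - 1 = (q + 1) * ((q - 1) * (q ^ 2 + 1)) := by
        rw [h4, Nat.add_sub_cancel]; ring
      rw [h6] at e3
      have hpos : 0 < (q - 1) * (q ^ 2 + 1) := by
        have : 0 < q - 1 := by omega
        positivity
      have := Nat.le_of_dvd (by omega) (Nat.dvd_of_mul_dvd_mul_right hpos e3)
      omega
  by_cases hc0 : c = 0
  · rw [if_pos hc0, hc0]
    have htot : ∑ c ∈ Finset.range (q + 1), ∑ l ∈ Finset.range e, ψ (ω ^ (c + (q + 1) * l)) = -1 := by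
      rw [Finset.sum_comm, ← aux_split (fun k => ψ (ω ^ k)), ← he]
      have h1 := hsum ψ
      have h2 := AddChar.sum_mulShift (1 : F) hprim
      simp at h2
      rw [h2] at h1
      rw [AddChar.map_zero_eq_one] at h1
      linear_combination -h1
    rw [Finset.sum_range_succ'] at htot
    rw [Finset.sum_congr rfl (g := fun _ => (q : ℂ) - 1)] at htot
    · simp only [Finset.sum_const, Finset.card_range, nsmul_eq_mul] at htot
      linear_combination htot
    · intro k hk
      exact hgen (k + 1) (by omega) (by have := Finset.mem_range.1 hk; omega)
  · rw [if_neg hc0]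
    exact hgen c hc0 hc

theorem stmt_5 (p : ℕ) [Fact p.Prime] (f : ℕ) (hf : 0 < f) (q : ℕ) (hq : q = p ^ f)
    (m : ℕ) (hm : 0 < m) (hdvd : 2 * m ∣ q + 1)
    {F : Type*} [Field F] [Fintype F] [Algebra (ZMod p) F]
    (hcard : Fintype.card F = q ^ 4)
    (ω : F) (hω : ∀ x : F, x ≠ 0 → ∃ k : ℕ, x = ω ^ k)
    (i : ℕ) (hi : i ≤ 2 * m - 1) :
    ∑ x ∈ cycl ω (2 * m) i, canChar p F x =
      if i = 0 then (((q ^ 2 - 1) / (2 * m) : ℕ) : ℂ) - (q : ℂ) ^ 2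
      else (((q ^ 2 - 1) / (2 * m) : ℕ) : ℂ) := by
  have hchar : CharP F p := charP_of_injective_algebraMap (algebraMap (ZMod p) F).injective p
  obtain ⟨ψ, hψ, hprim, hfrob, hint⟩ := aux_char p F
  simp_rw [← hψ]
  obtain ⟨M, hM⟩ := hdvd
  have hqodd : Odd q := by
    rw [← Nat.not_even_iff_odd]
    rintro ⟨r, hr⟩
    have : q + 1 = 2 * (m * M) := by rw [hM]; ring
    omega
  have hpodd : Odd p := by
    rw [hq] at hqodd
    exact (Nat.odd_pow_iff (by omega)).1 hqodd
  have hq2 : 2 ≤ q := by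
    rw [hq]
    calc 2 ≤ p := (Fact.out : p.Prime).two_le
      _ = p ^ 1 := (pow_one p).symm
      _ ≤ p ^ f := Nat.pow_le_pow_right (Fact.out : p.Prime).pos hf
  have hq3 : 3 ≤ q := by
    obtain ⟨r, hr⟩ := hqodd
    omega
  have hω0 : ω ≠ 0 := by
    rintro rfl
    have h01 : ∀ x : F, x = 0 ∨ x = 1 := by
      intro x
      by_cases hx : x = 0
      · exact Or.inl hx
      · obtain ⟨k, hk⟩ := hω x hx
        rcases Nat.eq_zero_or_pos k with h | h
        · right; rw [hk, h, pow_zero]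
        · left; rw [hk, zero_pow (by omega)]
    have hle : Fintype.card F ≤ 2 := by
      rw [← Finset.card_univ]
      calc _ ≤ ({0, 1} : Finset F).card := Finset.card_le_card (by
            intro x _; simpa using h01 x)
        _ ≤ 2 := Finset.card_le_two
    have : q ≤ q ^ 4 := Nat.le_self_pow (by norm_num) q
    omega
  have hord : orderOf ω = q ^ 4 - 1 := by
    have h1 : ∀ x : Fˣ, x ∈ Subgroup.zpowers (Units.mk0 ω hω0) := by
      intro x
      obtain ⟨k, hk⟩ := hω x x.ne_zero
      refine ⟨k, ?_⟩
      ext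
      simp [hk]
    have h2 := orderOf_eq_card_of_forall_mem_zpowers h1
    rw [Nat.card_eq_fintype_card, Fintype.card_units, hcard, ← orderOf_units] at h2
    simpa using h2
  have hn0 : 0 < q ^ 4 - 1 := by
    have : q ≤ q ^ 4 := Nat.le_self_pow (by norm_num) q
    omega
  have hinj : Set.InjOn (fun k : ℕ => ω ^ k) (Finset.range (q ^ 4 - 1) : Finset ℕ) := by
    rw [← hord]
    intro a ha b hb h
    exact pow_injOn_Iio_orderOf (by simpa using ha) (by simpa using hb) h
  have hsum : ∀ g : F → ℂ, ∑ x, g x = g 0 + ∑ k ∈ Finset.range (q ^ 4 - 1), g (ω ^ k) := by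
    intro g
    rw [← Finset.sum_image (f := g) hinj, ← Finset.add_sum_erase _ _ (Finset.mem_univ (0 : F))]
    congr 1
    apply Finset.sum_congr _ (fun _ _ => rfl)
    ext x
    simp only [Finset.mem_erase, Finset.mem_univ, and_true, Finset.mem_image, Finset.mem_range]
    constructor
    · intro hx
      obtain ⟨k, hk⟩ := hω x hx
      exact ⟨k % orderOf ω, by rw [← hord]; exact Nat.mod_lt _ (by omega),
        by rw [pow_mod_orderOf, hk]⟩
    · rintro ⟨k, _, rfl⟩
      exact pow_ne_zero _ hω0
  obtain ⟨e, he⟩ : ∃ e, q ^ 4 - 1 = (q + 1) * e := by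
    refine ⟨(q - 1) * (q ^ 2 + 1), ?_⟩
    obtain ⟨r, rfl⟩ : ∃ r, q = r + 1 := ⟨q - 1, by omega⟩
    simp only [Nat.add_sub_cancel]
    apply Nat.sub_eq_of_eq_add
    ring
  have hr : q ^ 4 - 1 = 2 * m * (M * e) := by rw [he, hM]; ring
  have hMe : 0 < M * e := by
    rcases Nat.eq_zero_or_pos (M * e) with h | h
    · rw [h] at hr; omega
    · exact h
  have hcyc : ∑ x ∈ cycl ω (2 * m) i, ψ x =
      ∑ k ∈ Finset.range (M * e), ψ (ω ^ (i + 2 * m * k)) := by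
    have hinj2 : Set.InjOn (fun k : ℕ => ω ^ (i + 2 * m * k)) (Finset.range (M * e) : Finset ℕ) := by
      intro a ha b hb h
      simp only [pow_add] at h
      have h := mul_left_cancel₀ (pow_ne_zero _ hω0) h
      simp only [Finset.coe_range, Set.mem_Iio] at ha hb
      have hlt : ∀ a, a < M * e → 2 * m * a < q ^ 4 - 1 := by
        intro a ha
        rw [hr]
        exact Nat.mul_lt_mul_of_pos_left ha (by omega)
      have := hinj (by simpa using hlt a ha) (by simpa using hlt b hb) h
      exact Nat.eq_of_mul_eq_mul_left (by omega) this
    rw [← Finset.sum_image (f := fun x => ψ x) hinj2]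
    apply Finset.sum_congr _ (fun _ _ => rfl)
    ext x
    simp only [cycl, Finset.mem_filter, Finset.mem_univ, true_and, Finset.mem_image,
      Finset.mem_range]
    constructor
    · rintro ⟨k, rfl⟩
      refine ⟨k % (M * e), Nat.mod_lt _ hMe, ?_⟩
      conv_rhs => rw [← Nat.mod_add_div k (M * e)]
      have : i + 2 * m * (k % (M * e) + M * e * (k / (M * e))) =
        i + 2 * m * (k % (M * e)) + (2 * m * (M * e)) * (k / (M * e)) := by ring
      rw [this, pow_add _ (i + 2 * m * (k % (M * e))), pow_mul _ (2 * m * (M * e)), ← hr, ← hord,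
        pow_orderOf_eq_one]
      simp
    · rintro ⟨k, _, rfl⟩
      exact ⟨k, rfl⟩
  rw [hcyc, aux_split, Finset.sum_comm]
  have hT : ∀ j ∈ Finset.range M, ∑ l ∈ Finset.range e, ψ (ω ^ (i + 2 * m * (j + M * l))) =
      ((q : ℂ) - 1) + if j = 0 then (if i = 0 then - (q : ℂ) ^ 2 else 0) else 0 := by
    intro j hj
    have hj := Finset.mem_range.1 hj
    have hlt : i + 2 * m * j < q + 1 := by
      rw [hM]
      calc i + 2 * m * j < 2 * m + 2 * m * j := by omega
        _ = 2 * m * (j + 1) := by ring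
        _ ≤ 2 * m * M := Nat.mul_le_mul_left _ hj
    have := aux_T p hpodd f q hq hq3 hcard ψ hprim (by rw [hq]; exact hfrob f) hint ω hω0 hord hsum
      e he (i + 2 * m * j) hlt
    have h2 : ∀ l, i + 2 * m * (j + M * l) = i + 2 * m * j + (q + 1) * l := by
      intro l; rw [hM]; ring
    simp_rw [h2]
    rw [this]
    by_cases hi0 : i = 0
    · by_cases hj0 : j = 0
      · simp [hi0, hj0]; ring
      · simp [hi0, hj0]; omega
    · simp [hi0]
  have hM0 : 0 < M := Nat.pos_of_mul_pos_right hMe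
  rw [Finset.sum_congr rfl hT, Finset.sum_add_distrib, Finset.sum_ite_eq']
  have hdiv : (q ^ 2 - 1) / (2 * m) = M * (q - 1) := by
    apply Nat.div_eq_of_eq_mul_right (by omega)
    have := Nat.sq_sub_sq q 1
    rw [one_pow] at this
    rw [this, hM]; ring
  rw [hdiv]
  rw [if_pos (Finset.mem_range.2 hM0)]
  push_cast [Nat.cast_sub (show 1 ≤ q by omega)]
  simp only [Finset.sum_const, Finset.card_range, nsmul_eq_mul]
  split_ifs <;> ring
end
end

section
/- Let p be a prime, N > 2, and suppose there is a positive integer j with p^j ≡ −1 (mod N); choose j minimal and let f = 2js for a positive integer s. Then the Cayley graph on (F_{p^f},+) with connection set C_0^{(N,p^f)} is strongly regular with parameters (u², c(u+(−1)^s), −(−1)^s u + c² + 3(−1)^s c, c² + (−1)^s c), where u = p^{js} and c = (u−(−1)^s)/N. -/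
open scoped Classical

noncomputable section

def Pw (F : Type*) [Field F] [Fintype F] (n : ℕ) : Finset Fˣ :=
  Finset.univ.filter fun x => ∃ y : Fˣ, y ^ n = x

lemma mem_Pw {F : Type*} [Field F] [Fintype F] {n : ℕ} {x : Fˣ} :
    x ∈ Pw F n ↔ ∃ y : Fˣ, y ^ n = x := by simp [Pw]

lemma card_units_sub {F : Type*} [Field F] [Fintype F] : Fintype.card Fˣ = Fintype.card F - 1 :=
  Fintype.card_units F

lemma card_root {F : Type*} [Field F] [Fintype F] (n : ℕ) (hn : n ∣ Fintype.card Fˣ) :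
    (Finset.univ.filter fun y : Fˣ => y ^ n = 1).card = n := by
  have h := IsCyclic.card_powMonoidHom_ker (G := Fˣ) n
  rw [Nat.card_eq_fintype_card (α := Fˣ), Nat.gcd_eq_right hn] at h
  rw [Nat.card_eq_fintype_card, Fintype.card_subtype] at h
  refine Eq.trans ?_ h
  congr 1
  ext y
  simp [MonoidHom.mem_ker]

lemma sum_pow_eq {F : Type*} [Field F] [Fintype F] (n : ℕ) (hn : n ∣ Fintype.card Fˣ)
    (g : Fˣ → ℂ) : ∑ y : Fˣ, g (y ^ n) = n * ∑ x ∈ Pw F n, g x := by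
  have h1 : ∑ y : Fˣ, g (y ^ n) = ∑ x ∈ Pw F n, ∑ y : Fˣ with y ^ n = x, g (y ^ n) := by
    rw [Finset.sum_fiberwise_of_maps_to]
    intro y _; exact mem_Pw.2 ⟨y, rfl⟩
  rw [h1, Finset.mul_sum]
  refine Finset.sum_congr rfl fun x hx => ?_
  have h2 : ∑ y : Fˣ with y ^ n = x, g (y ^ n) = ∑ y : Fˣ with y ^ n = x, g x := by
    refine Finset.sum_congr rfl fun y hy => ?_
    rw [(Finset.mem_filter.1 hy).2]
  rw [h2, Finset.sum_const, nsmul_eq_mul]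
  congr 2
  obtain ⟨z, hz⟩ := mem_Pw.1 hx
  have := MonoidHom.card_fiber_eq_of_mem_range (powMonoidHom n : Fˣ →* Fˣ) (x := x) (y := 1)
    ⟨z, hz⟩ ⟨1, by simp⟩
  have h3 := card_root n hn
  simp only [powMonoidHom_apply] at this
  rw [this, h3]

lemma exists_char (p : ℕ) [Fact p.Prime] {F : Type*} [Field F] [Fintype F] [CharP F p] :
    ∃ ψ : AddChar F ℂ, ψ.IsPrimitive ∧ (∀ z, ψ (z ^ p) = ψ z) ∧ ∀ z, IsIntegral ℤ (ψ z) := by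
  let _ := ZMod.algebra F p
  let ψ : AddChar F ℂ := (ZMod.stdAddChar (N := p)).compAddMonoidHom
    (Algebra.trace (ZMod p) F).toAddMonoidHom
  have hψ : ∀ z, ψ z = ZMod.stdAddChar (Algebra.trace (ZMod p) F z) := fun z => rfl
  refine ⟨ψ, AddChar.IsPrimitive.of_ne_one ?_, ?_, ?_⟩
  · obtain ⟨b, hb⟩ := Algebra.trace_surjective (ZMod p) F 1
    refine AddChar.ne_one_iff.2 ⟨b, ?_⟩
    rw [hψ, hb]
    intro h
    have := (ZMod.isPrimitive_stdAddChar p).zmod_char_eq_one_iff p 1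
    exact one_ne_zero (this.1 h)
  · intro z
    rw [hψ, hψ]
    have := Algebra.trace_eq_of_algEquiv (FiniteField.frobeniusAlgEquivOfAlgebraic (ZMod p) F) z
    rw [FiniteField.coe_frobeniusAlgEquivOfAlgebraic, ZMod.card] at this
    rw [← this]
  · intro z
    refine IsIntegral.of_pow (n := p) (Fact.out : p.Prime).pos ?_
    rw [← AddChar.map_nsmul_eq_pow]
    simp [isIntegral_one]

lemma char_frob (p : ℕ) {F : Type*} [Field F] [Fintype F] 
    (ψ : AddChar F ℂ) (h : ∀ z, ψ (z ^ p) = ψ z) (j : ℕ) (z : F) : ψ (z ^ p ^ j) = ψ z := by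
  induction j with
  | zero => simp
  | succ j ih => rw [pow_succ, pow_mul, h, ih]

lemma pw_of_pow {F : Type*} [Field F] [Fintype F] (Q : ℕ) (hQ : 2 ≤ Q)
    (hd : (Q - 1) * (Q + 1) ∣ Fintype.card Fˣ) (x : Fˣ) (hx : x ^ (Q - 1) = 1) :
    x ∈ Pw F (Q + 1) := by
  obtain ⟨g, hg⟩ := IsCyclic.exists_generator (α := Fˣ)
  obtain ⟨i, hi⟩ := mem_powers_iff_mem_zpowers.2 (hg x)
  simp only at hi
  subst hi
  rw [← pow_mul] at hx
  have h1 := orderOf_dvd_of_pow_eq_one hx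
  rw [orderOf_eq_card_of_forall_mem_zpowers hg, Nat.card_eq_fintype_card] at h1
  have h2 := hd.trans h1
  rw [mul_comm i] at h2
  obtain ⟨k, rfl⟩ := Nat.dvd_of_mul_dvd_mul_left (by omega) h2
  exact mem_Pw.2 ⟨g ^ k, by rw [← pow_mul, mul_comm]⟩

def SS {F : Type*} [Field F] [Fintype F] (ψ : AddChar F ℂ) (n : ℕ) (a : F) : ℂ :=
  ∑ x : F, ψ (a * x ^ n)

lemma SS_inv {F : Type*} [Field F] [Fintype F] (ψ : AddChar F ℂ) (n : ℕ) (a : F) (t : Fˣ)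
    (ht : t ∈ Pw F n) : SS ψ n (a * t) = SS ψ n a := by
  obtain ⟨y, rfl⟩ := mem_Pw.1 ht
  unfold SS
  refine Fintype.sum_equiv (Equiv.mulLeft₀ (y : F) y.ne_zero) _ _ fun x => ?_
  simp [mul_pow, mul_assoc]

def LL {F : Type*} [Field F] (Q : ℕ) (a y : F) : F := a * y + a ^ Q * y ^ (Q * Q)

lemma cross {F : Type*} [Field F] [Fintype F] (ψ : AddChar F ℂ) (Q : ℕ)
    (hψ : ∀ z, ψ (z ^ Q) = ψ z) (a x y : F) :
    ψ (a * (x ^ Q * y + x * y ^ Q)) = ψ (x ^ Q * LL Q a y) := by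
  have : ψ (a * (x * y ^ Q)) = ψ (x ^ Q * (a ^ Q * y ^ (Q * Q))) := by
    rw [← hψ]; congr 1; rw [pow_mul]; ring
  rw [mul_add, AddChar.map_add_eq_mul, this, LL, mul_add, AddChar.map_add_eq_mul]
  congr 2; ring

lemma SS_sq {F : Type*} [Field F] [Fintype F] (p : ℕ) [Fact p.Prime] [CharP F p]
    (ψ : AddChar F ℂ) (hp : ψ.IsPrimitive) (j : ℕ) (Q : ℕ) (hQ : Q = p ^ j)
    (hψ : ∀ z, ψ (z ^ Q) = ψ z) (h1 : (-1 : Fˣ) ∈ Pw F (Q + 1)) (a : F) :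
    (SS ψ (Q + 1) a) ^ 2 = Fintype.card F * 
      ∑ y ∈ Finset.univ.filter (fun y : F => LL Q a y = 0), ψ (a * y ^ (Q + 1)) := by
  have hadd : ∀ x y : F, (x + y) ^ Q = x ^ Q + y ^ Q := by
    intro x y; subst hQ; exact add_pow_char_pow x y p j
  have hinj : Function.Injective (fun x : F => x ^ Q) := by
    subst hQ; exact (iterateFrobenius F p j).injective
  have hbij : Function.Bijective (fun x : F => x ^ Q) := Finite.injective_iff_bijective.1 hinj
  have e1 : (SS ψ (Q + 1) a) ^ 2 = SS ψ (Q + 1) a * SS ψ (Q + 1) (-a) := by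
    have := SS_inv ψ (Q + 1) a (-1) h1
    simp only [Units.val_neg, Units.val_one, mul_neg, mul_one] at this
    rw [this, sq]
  rw [e1]
  have e2 : SS ψ (Q + 1) a * SS ψ (Q + 1) (-a) =
      ∑ y : F, ∑ x : F, ψ (a * y ^ (Q + 1)) * ψ (x ^ Q * LL Q a y) := by
    rw [Finset.sum_comm]
    unfold SS
    rw [mul_comm, Finset.sum_mul]
    refine Finset.sum_congr rfl fun x _ => ?_
    rw [Finset.mul_sum]
    symm
    refine Fintype.sum_equiv (Equiv.addLeft x) _ _ fun y => ?_
    rw [← cross ψ Q hψ, ← AddChar.map_add_eq_mul, ← AddChar.map_add_eq_mul]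
    congr 1
    simp only [Equiv.coe_addLeft, pow_succ, hadd]
    ring
  rw [e2, Finset.sum_filter, Finset.mul_sum]
  refine Finset.sum_congr rfl fun y _ => ?_
  rw [← Finset.mul_sum]
  have e3 : ∑ x : F, ψ (x ^ Q * LL Q a y) = ∑ x : F, ψ (x * LL Q a y) :=
    Fintype.sum_bijective _ hbij _ _ fun x => rfl
  rw [e3, AddChar.sum_mulShift _ hp]
  split_ifs <;> simp [mul_comm]

lemma LL_card {F : Type*} [Field F] [Fintype F] (Q : ℕ) (hQ : 2 ≤ Q)
    (hd : (Q - 1) * (Q + 1) ∣ Fintype.card Fˣ) (a : F) (ha : a ≠ 0) (y0 : F) (hy0 : y0 ≠ 0)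
    (h0 : LL Q a y0 = 0) :
    (Finset.univ.filter (fun y : F => LL Q a y = 0)).card = Q * Q := by
  obtain ⟨R, rfl⟩ : ∃ R, Q = R + 1 := ⟨Q - 1, by omega⟩
  set Q := R + 1 with hQd
  have hQQ : Q * Q = (Q - 1) * (Q + 1) + 1 := by
    rw [hQd]; simp; ring
  set m := (Q - 1) * (Q + 1) with hm
  have key : Finset.univ.filter (fun y : F => LL Q a y = 0) =
      insert 0 ((Finset.univ.filter fun y : Fˣ => y ^ m = 1).image fun l : Fˣ => (l : F) * y0) := by
    have h2 : ∀ l : F, LL Q a (l * y0) = l * (a ^ Q * y0 ^ (Q * Q)) * (l ^ m - 1) := by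
      intro l
      unfold LL at h0 ⊢
      have : a * y0 = - (a ^ Q * y0 ^ (Q * Q)) := by linear_combination h0
      rw [mul_pow, hQQ, pow_succ l, ← hQQ]
      linear_combination l * this
    ext y
    simp only [Finset.mem_filter, Finset.mem_univ, true_and, Finset.mem_insert, Finset.mem_image]
    constructor
    · intro h
      by_cases hy : y = 0
      · exact Or.inl hy
      right
      have hl : y / y0 ≠ 0 := div_ne_zero hy hy0
      refine ⟨Units.mk0 (y / y0) hl, ?_, by simp [hy0]⟩
      have h3 := h2 (y / y0)
      rw [div_mul_cancel₀ _ hy0, h] at h3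
      have h4 : (y / y0) ^ m - 1 = 0 := by
        rcases mul_eq_zero.1 h3.symm with h5 | h5
        · exfalso
          exact mul_ne_zero hl (mul_ne_zero (pow_ne_zero _ ha) (pow_ne_zero _ hy0)) h5
        · exact h5
      ext
      simpa using sub_eq_zero.1 h4
    · rintro (rfl | ⟨l, hl, rfl⟩)
      · simp [LL, hQd]
      · rw [h2, ← Units.val_pow_eq_pow_val, hl]; simp
  rw [key, Finset.card_insert_of_notMem, Finset.card_image_of_injective, card_root m hd, hQQ]
  · intro x y h
    ext
    exact mul_right_cancel₀ hy0 h
  · simp [hy0]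

lemma SS_vals {F : Type*} [Field F] [Fintype F] (p : ℕ) [Fact p.Prime] [CharP F p]
    (ψ : AddChar F ℂ) (hp : ψ.IsPrimitive) (j : ℕ) (Q : ℕ) (hQ : Q = p ^ j) (hQ2 : 2 ≤ Q)
    (hψ : ∀ z, ψ (z ^ Q) = ψ z) (h1 : (-1 : Fˣ) ∈ Pw F (Q + 1))
    (hd : (Q - 1) * (Q + 1) ∣ Fintype.card Fˣ) (a : F) (ha : a ≠ 0) :
    (SS ψ (Q + 1) a) ^ 2 = 0 ∨ (SS ψ (Q + 1) a) ^ 2 = Fintype.card F ∨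
    ((SS ψ (Q + 1) a) ^ 2 = Fintype.card F * (Q * Q) ∧ ∃ y : F, y ≠ 0 ∧ LL Q a y = 0) := by
  have hadd : ∀ x y : F, (x + y) ^ Q = x ^ Q + y ^ Q := by
    intro x y; subst hQ; exact add_pow_char_pow x y p j
  have hLadd : ∀ x y : F, LL Q a (x + y) = LL Q a x + LL Q a y := by
    intro x y; simp only [LL, pow_mul, hadd]; ring
  rw [SS_sq p ψ hp j Q hQ hψ h1 a]
  set K := Finset.univ.filter (fun y : F => LL Q a y = 0) with hK
  have memK : ∀ y, y ∈ K ↔ LL Q a y = 0 := fun y => by simp [hK]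
  by_cases hall : ∀ y ∈ K, ψ (a * y ^ (Q + 1)) = 1
  · right
    rw [Finset.sum_congr rfl hall]
    by_cases hy : ∃ y : F, y ≠ 0 ∧ LL Q a y = 0
    · right
      refine ⟨?_, hy⟩
      obtain ⟨y, hy0, hy⟩ := hy
      have := LL_card Q hQ2 hd a ha y hy0 hy
      rw [← hK] at this
      simp [this]
    · left
      have : K = {0} := by
        ext y
        rw [memK, Finset.mem_singleton]
        constructor
        · intro h
          by_contra h0
          exact hy ⟨y, h0, h⟩
        · rintro rfl; simp [LL]; right; omega
      simp [this]
  · left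
    push Not at hall
    obtain ⟨y0, hy0, hne⟩ := hall
    have hsh : ∑ y ∈ K, ψ (a * y ^ (Q + 1)) =
        ψ (a * y0 ^ (Q + 1)) * ∑ y ∈ K, ψ (a * y ^ (Q + 1)) := by
      rw [Finset.mul_sum]
      symm
      refine Finset.sum_equiv (Equiv.addLeft y0) ?_ ?_
      · intro y; rw [memK, memK]; simp [hLadd, (memK _).1 hy0]
      · intro y hy
        have hc := cross ψ Q hψ a y0 y
        rw [(memK _).1 hy, mul_zero, AddChar.map_zero_eq_one] at hc
        have : a * (y0 + y) ^ (Q + 1) = a * y0 ^ (Q + 1) + a * y ^ (Q + 1) +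
            a * (y0 ^ Q * y + y0 * y ^ Q) := by
          simp only [pow_succ, hadd]; ring
        simp only [Equiv.coe_addLeft]
        rw [this, AddChar.map_add_eq_mul, hc, AddChar.map_add_eq_mul, mul_one]
    have : (1 - ψ (a * y0 ^ (Q + 1))) * ∑ y ∈ K, ψ (a * y ^ (Q + 1)) = 0 := by
      linear_combination hsh
    rcases mul_eq_zero.1 this with h | h
    · exact absurd (sub_eq_zero.1 h).symm hne
    · rw [h, mul_zero]

def eta {F : Type*} [Field F] [Fintype F] (ψ : AddChar F ℂ) (n : ℕ) (a : F) : ℂ :=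
  ∑ d ∈ Pw F n, ψ (a * d)

lemma SS_eta {F : Type*} [Field F] [Fintype F] (ψ : AddChar F ℂ) (n : ℕ) (hn0 : n ≠ 0)
    (hn : n ∣ Fintype.card Fˣ) (a : F) : SS ψ n a = 1 + n * eta ψ n a := by
  unfold SS eta
  rw [← sum_pow_eq n hn (fun d => ψ (a * d)), ← Finset.add_sum_erase _ _ (Finset.mem_univ (0:F))]
  congr 1
  · simp [hn0]
  · symm
    refine Finset.sum_bij (fun (x : Fˣ) _ => (x : F)) ?_ ?_ ?_ ?_
    · simp
    · intro x _ y _ h; exact Units.ext h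
    · intro x hx; exact ⟨Units.mk0 x (by simpa using hx), by simp, by simp⟩
    · simp

lemma eta_int {F : Type*} [Field F] [Fintype F] (ψ : AddChar F ℂ) (n : ℕ) (hn : n ≠ 0) (a : F)
    (hi : ∀ z, IsIntegral ℤ (ψ z)) (m : ℤ) (hm : 1 + n * eta ψ n a = m) :
    ∃ e : ℤ, eta ψ n a = e ∧ m = 1 + n * e := by
  have h1 : IsIntegral ℤ (eta ψ n a) := IsIntegral.sum _ fun d _ => hi _
  have hn' : (n : ℂ) ≠ 0 := Nat.cast_ne_zero.2 hn
  obtain ⟨e, he⟩ := h1.exists_int_iff_exists_rat.1 ⟨((m : ℚ) - 1) / n, by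
    push_cast; field_simp; linear_combination hm⟩
  refine ⟨e, he, ?_⟩
  rw [he] at hm
  exact_mod_cast hm.symm

lemma SS_final {F : Type*} [Field F] [Fintype F] (p : ℕ) [Fact p.Prime] [CharP F p]
    (ψ : AddChar F ℂ) (hp : ψ.IsPrimitive) (j : ℕ) (Q : ℕ) (hQ : Q = p ^ j) (hQ2 : 2 ≤ Q)
    (hψ : ∀ z, ψ (z ^ Q) = ψ z) (hi : ∀ z, IsIntegral ℤ (ψ z)) (h1 : (-1 : Fˣ) ∈ Pw F (Q + 1))
    (hd : (Q - 1) * (Q + 1) ∣ Fintype.card Fˣ) (u ε : ℤ) (hε : ε ^ 2 = 1)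
    (hu : (Q : ℤ) + 1 ∣ u - ε) (hq : (Fintype.card F : ℤ) = u ^ 2) (a : F) (ha : a ≠ 0) :
    SS ψ (Q + 1) a = ε * u ∨
    (SS ψ (Q + 1) a = ε * u - (Q + 1) * (ε * u) ∧ ∃ y : F, y ≠ 0 ∧ LL Q a y = 0) := by
  have hqC : (Fintype.card F : ℂ) = (u : ℂ) ^ 2 := by exact_mod_cast congrArg (Int.cast (R := ℂ)) hq
  have hs := SS_eta ψ (Q + 1) (by omega) ((Dvd.intro_left _ rfl).trans hd) a
  have hI : ∀ m : ℤ, SS ψ (Q + 1) a = m → (Q : ℤ) + 1 ∣ m - 1 := by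
    intro m hm
    obtain ⟨e, -, he⟩ := eta_int ψ (Q + 1) (by omega) a hi m (hs ▸ hm)
    exact ⟨e, by rw [he]; push_cast; ring⟩
  have hbig : ∀ z : ℤ, (Q : ℤ) + 1 ∣ z → |z| ≤ 2 → z = 0 := by
    intro z hz hz2
    exact Int.eq_zero_of_abs_lt_dvd hz (by omega)
  obtain ⟨t, ht⟩ := hu
  have hu' : u = ε + (Q + 1) * t := by linear_combination ht
  have hno : ∀ v : ℤ, (Q : ℤ) + 1 ∣ v - (-1) → ¬ (Q : ℤ) + 1 ∣ v - 1 := by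
    intro v h1 h2
    have := hbig 2 (by have := dvd_sub h1 h2; rwa [show v - -1 - (v - 1) = 2 by ring] at this) (by norm_num)
    omega
  rcases SS_vals p ψ hp j Q hQ hQ2 hψ h1 hd a ha with h | h | ⟨h, hy⟩
  · exfalso
    have h0 : SS ψ (Q + 1) a = ((0 : ℤ) : ℂ) := by simpa using h
    have := hbig _ (hI 0 h0) (by norm_num)
    omega
  · left
    have : (SS ψ (Q + 1) a) ^ 2 = (ε * u : ℂ) ^ 2 := by
      rw [h, hqC, mul_pow]
      have : (ε : ℂ) ^ 2 = 1 := by exact_mod_cast hε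
      rw [this, one_mul]
    rcases sq_eq_sq_iff_eq_or_eq_neg.1 this with h2 | h2
    · exact h2
    · exfalso
      have h3 := hI (-(ε * u)) (by rw [h2]; push_cast; ring)
      refine hno _ ⟨-ε * t, ?_⟩ h3
      rw [hu']; linear_combination -hε
  · right
    refine ⟨?_, hy⟩
    have : (SS ψ (Q + 1) a) ^ 2 = (ε * u * Q : ℂ) ^ 2 := by
      rw [h, hqC, mul_pow, mul_pow]
      have : (ε : ℂ) ^ 2 = 1 := by exact_mod_cast hε
      rw [this]; ring
    rcases sq_eq_sq_iff_eq_or_eq_neg.1 this with h2 | h2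
    · exfalso
      have h3 := hI (ε * u * Q) (by rw [h2]; push_cast; ring)
      refine hno _ ⟨ε * t * Q + 1, ?_⟩ h3
      rw [hu']; linear_combination (Q : ℤ) * hε
    · rw [h2]; ring

lemma exc_unique {F : Type*} [Field F] [Fintype F] (Q : ℕ) (hQ2 : 2 ≤ Q)
    (hd : (Q - 1) * (Q + 1) ∣ Fintype.card Fˣ) (a b : Fˣ) 
    (ha : ∃ y : F, y ≠ 0 ∧ LL Q (a : F) y = 0) (hb : ∃ y : F, y ≠ 0 ∧ LL Q (b : F) y = 0) :
    a / b ∈ Pw F (Q + 1) := by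
  have key : ∀ a : Fˣ, (∃ y : F, y ≠ 0 ∧ LL Q (a : F) y = 0) →
      ∃ y : Fˣ, (a * y ^ (Q + 1)) ^ (Q - 1) = -1 := by
    rintro a ⟨y, hy, h⟩
    refine ⟨Units.mk0 y hy, ?_⟩
    ext
    simp only [Units.val_pow_eq_pow_val, Units.val_mul, Units.val_mk0, Units.val_neg, Units.val_one]
    obtain ⟨R, rfl⟩ : ∃ R, Q = R + 1 := ⟨Q - 1, by omega⟩
    unfold LL at h
    simp only [Nat.add_sub_cancel]
    have h2 : (a : F) * y * ((a * y ^ (R + 1 + 1)) ^ R + 1) = 0 := by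
      rw [← h]; ring
    have h3 := (mul_eq_zero.1 h2).resolve_left (mul_ne_zero a.ne_zero hy)
    linear_combination h3
  obtain ⟨y, hy⟩ := key a ha
  obtain ⟨z, hz⟩ := key b hb
  have : (a * y ^ (Q + 1)) / (b * z ^ (Q + 1)) ∈ Pw F (Q + 1) := by
    apply pw_of_pow Q hQ2 hd
    rw [div_pow, hy, hz]; simp
  obtain ⟨w, hw⟩ := mem_Pw.1 this
  refine mem_Pw.2 ⟨w * z / y, ?_⟩
  rw [div_pow, mul_pow, hw, mul_div_assoc, div_mul_div_comm, div_eq_div_iff_mul_eq_mul]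
  apply Units.ext
  push_cast
  ring

lemma Pw_mul {F : Type*} [Field F] [Fintype F] {n : ℕ} {x y : Fˣ} (hx : x ∈ Pw F n)
    (hy : y ∈ Pw F n) : x * y ∈ Pw F n := by
  obtain ⟨a, rfl⟩ := mem_Pw.1 hx
  obtain ⟨b, rfl⟩ := mem_Pw.1 hy
  exact mem_Pw.2 ⟨a * b, mul_pow _ _ _⟩

lemma Pw_inv {F : Type*} [Field F] [Fintype F] {n : ℕ} {x : Fˣ} (hx : x ∈ Pw F n) :
    x⁻¹ ∈ Pw F n := by
  obtain ⟨a, rfl⟩ := mem_Pw.1 hx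
  exact mem_Pw.2 ⟨a⁻¹, inv_pow _ _⟩

lemma Pw_mono {F : Type*} [Field F] [Fintype F] {n m : ℕ} (h : n ∣ m) {x : Fˣ}
    (hx : x ∈ Pw F m) : x ∈ Pw F n := by
  obtain ⟨a, rfl⟩ := mem_Pw.1 hx
  obtain ⟨k, rfl⟩ := h
  exact mem_Pw.2 ⟨a ^ k, by rw [← pow_mul, mul_comm]⟩

lemma sum_Pw_mul {F : Type*} [Field F] [Fintype F] {n : ℕ} {t : Fˣ} (ht : t ∈ Pw F n)
    (g : Fˣ → ℂ) : ∑ d ∈ Pw F n, g (d * t) = ∑ d ∈ Pw F n, g d := by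
  refine Finset.sum_equiv (Equiv.mulRight t) ?_ ?_
  · intro d
    constructor
    · intro h; exact Pw_mul h ht
    · intro h
      have := Pw_mul h (Pw_inv ht)
      simpa using this
  · intro d _; simp

lemma card_Pw {F : Type*} [Field F] [Fintype F] (n : ℕ) (hn : n ∣ Fintype.card Fˣ) :
    (Fintype.card Fˣ : ℂ) = n * (Pw F n).card := by
  simpa using sum_pow_eq n hn (fun _ => 1)

lemma eta_vals {F : Type*} [Field F] [Fintype F] (p : ℕ) [Fact p.Prime] [CharP F p]
    (ψ : AddChar F ℂ) (hp : ψ.IsPrimitive) (j : ℕ) (Q : ℕ) (hQ : Q = p ^ j) (hQ2 : 2 ≤ Q)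
    (hψ : ∀ z, ψ (z ^ Q) = ψ z) (hi : ∀ z, IsIntegral ℤ (ψ z)) (h1 : (-1 : Fˣ) ∈ Pw F (Q + 1))
    (hd : (Q - 1) * (Q + 1) ∣ Fintype.card Fˣ) (u ε c : ℤ) (hε : ε ^ 2 = 1)
    (hu : (Q : ℤ) + 1 ∣ u - ε) (hq : (Fintype.card F : ℤ) = u ^ 2) (N : ℕ) (hN0 : N ≠ 0)
    (hN : N ∣ Q + 1) (hc : (N : ℤ) * c = u - ε) (a : Fˣ) :
    eta ψ N a = ε * c ∨ eta ψ N a = ε * c - ε * u := by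
  have hdQ : Q + 1 ∣ Fintype.card Fˣ := (Dvd.intro_left _ rfl).trans hd
  have hdN := hN.trans hdQ
  have hf := SS_final p ψ hp j Q hQ hQ2 hψ hi h1 hd u ε hε hu hq
  set E : Fˣ → Prop := fun b => SS ψ (Q + 1) (b : F) ≠ ε * u with hE
  have hE1 : ∀ b : Fˣ, E b → ∃ y : F, y ≠ 0 ∧ LL Q (b : F) y = 0 := fun b hb =>
    ((hf b b.ne_zero).resolve_left hb).2
  have hQC : ((Q : ℂ) + 1) ≠ 0 := by exact_mod_cast Nat.succ_ne_zero Q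
  have hNC : (N : ℂ) ≠ 0 := by exact_mod_cast hN0
  have heta : ∀ b : Fˣ, eta ψ (Q + 1) b = (ε * u - 1) / (Q + 1) - ε * u * (if E b then 1 else 0) := by
    intro b
    have hs := SS_eta ψ (Q + 1) (by omega) hdQ (b : F)
    push_cast at hs
    split_ifs with h
    · rw [((hf b b.ne_zero).resolve_left h).1] at hs
      field_simp
      linear_combination -hs
    · rw [not_not.1 h] at hs
      field_simp
      linear_combination -hs
  have hsum : ∑ d ∈ Pw F N, eta ψ (Q + 1) ((a * d : Fˣ) : F) = (Pw F (Q + 1)).card * eta ψ N a := by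
    unfold eta
    rw [Finset.sum_comm, Finset.sum_congr rfl (g := fun _ => ∑ d ∈ Pw F N, ψ (a * d))]
    · simp
    · intro e he
      rw [← sum_Pw_mul (Pw_mono hN he) (fun d => ψ (a * d))]
      refine Finset.sum_congr rfl fun d _ => ?_
      push_cast; rw [mul_assoc]
  have hcount : ∑ d ∈ Pw F N, (if E (a * d) then (1 : ℂ) else 0) = 0 ∨
      ∑ d ∈ Pw F N, (if E (a * d) then (1 : ℂ) else 0) = (Pw F (Q + 1)).card := by
    by_cases h : ∃ d ∈ Pw F N, E (a * d)
    · right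
      obtain ⟨d0, hd0, hE0⟩ := h
      rw [← sum_Pw_mul hd0 (fun d => if E (a * d) then (1 : ℂ) else 0), ← Finset.sum_filter]
      simp only [Finset.sum_const, nsmul_eq_mul, mul_one]
      congr 2
      ext d
      rw [Finset.mem_filter]
      constructor
      · rintro ⟨-, h⟩
        have := exc_unique Q hQ2 hd _ _ (hE1 _ h) (hE1 _ hE0)
        have e : a * (d * d0) / (a * d0) = d := by
          rw [div_eq_iff_eq_mul]; ac_rfl
        rwa [e] at this
      · intro h
        refine ⟨Pw_mono hN h, ?_⟩
        have := SS_inv ψ (Q + 1) ((a * d0 : Fˣ) : F) d h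
        simp only [hE]
        rw [show ((a * (d * d0) : Fˣ) : F) = ((a * d0 : Fˣ) : F) * d by push_cast; ring, this]
        exact hE0
    · left
      push Not at h
      exact Finset.sum_eq_zero fun d hd => if_neg (h d hd)
  have hpos : ((Pw F (Q + 1)).card : ℂ) ≠ 0 := by
    have : (Pw F (Q + 1)).Nonempty := ⟨_, h1⟩
    exact_mod_cast this.card_pos.ne'
  have hmain : (Pw F (Q + 1)).card * eta ψ N a =
      (Pw F N).card * ((ε * u - 1) / (Q + 1)) -
        ε * u * ∑ d ∈ Pw F N, (if E (a * d) then (1 : ℂ) else 0) := by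
    rw [← hsum]
    simp only [heta]
    rw [Finset.sum_sub_distrib, Finset.mul_sum]
    simp
  have hcN := card_Pw (F := F) N hdN
  have hcQ := card_Pw (F := F) (Q + 1) hdQ
  push_cast at hcQ
  have hcC : (N : ℂ) * c = u - ε := by exact_mod_cast congrArg (Int.cast (R := ℂ)) hc
  have hεC : (ε : ℂ) ^ 2 = 1 := by exact_mod_cast hε
  have h3 : ((Pw F N).card : ℂ) * ((ε * u - 1) / (Q + 1)) = (Pw F (Q + 1)).card * (ε * c) := by
    have : (ε * u - 1 : ℂ) = N * (ε * c) := by linear_combination -ε * hcC + hεC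
    rw [this]
    field_simp
    linear_combination (ε * c : ℂ) * (hcQ - hcN)
  rw [h3] at hmain
  rcases hcount with h | h
  · left
    rw [h] at hmain
    apply mul_left_cancel₀ hpos
    linear_combination hmain
  · right
    rw [h] at hmain
    apply mul_left_cancel₀ hpos
    linear_combination hmain

/-- number of representations -/
lemma count_T {F : Type*} [Field F] [Fintype F] (ψ : AddChar F ℂ) (hp : ψ.IsPrimitive)
    (D : Finset F) (r t : ℂ)
    (h : ∀ a : F, a ≠ 0 → ∑ d ∈ D, ψ (a * d) = r ∨ ∑ d ∈ D, ψ (a * d) = t) (w : F) (hw : w ≠ 0) :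
    (Fintype.card F : ℂ) * ((D.filter fun d => w - d ∈ D).card - (r + t) * (if w ∈ D then 1 else 0))
      = (D.card - r) * (D.card - t) := by
  set η : F → ℂ := fun a => ∑ d ∈ D, ψ (a * d) with hη
  have hsm : ∀ b : F, ∑ a : F, ψ (a * b) = if b = 0 then (Fintype.card F : ℂ) else 0 := by
    intro b; rw [AddChar.sum_mulShift _ hp]; split_ifs <;> simp
  have h0 : ∑ a : F, (η a - r) * (η a - t) * ψ (a * (-w)) = (D.card - r) * (D.card - t) := by
    rw [Finset.sum_eq_single 0]
    · simp [hη]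
    · intro a _ ha
      rcases h a ha with h | h
      · simp [hη, h]
      · simp [hη, h]
    · simp
  rw [← h0]
  have e1 : ∑ a : F, η a * ψ (a * (-w)) = Fintype.card F * (if w ∈ D then 1 else 0) := by
    simp only [hη, Finset.sum_mul, ← AddChar.map_add_eq_mul, ← mul_add]
    rw [Finset.sum_comm]
    simp only [hsm, add_neg_eq_zero]
    simp
  have e2 : ∑ a : F, η a * η a * ψ (a * (-w)) =
      Fintype.card F * (D.filter fun d => w - d ∈ D).card := by
    simp only [hη, Finset.sum_mul, Finset.mul_sum, ← AddChar.map_add_eq_mul, ← mul_add]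
    rw [Finset.sum_comm]
    rw [Finset.sum_congr rfl (g := fun d => if w - d ∈ D then (Fintype.card F : ℂ) else 0)]
    · rw [← Finset.sum_filter]; simp [mul_comm]
    · intro d _
      rw [Finset.sum_comm]
      simp only [hsm]
      have : ∀ x : F, (d + x + -w = 0) ↔ x = w - d := by
        intro x; constructor
        · intro h; linear_combination h
        · intro h; rw [h]; ring
      have this' : ∀ x : F, (x + d + -w = 0) ↔ x = w - d := by
        intro x; rw [add_comm x d]; exact this x
      simp [this']
  have e3 : ∑ a : F, ψ (a * (-w)) = 0 := by rw [hsm]; simp [hw]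
  have : ∀ a, (η a - r) * (η a - t) * ψ (a * (-w)) = η a * η a * ψ (a * (-w))
      - (r + t) * (η a * ψ (a * (-w))) + r * t * ψ (a * (-w)) := fun a => by ring
  simp only [this, Finset.sum_add_distrib, Finset.sum_sub_distrib, ← Finset.mul_sum, e1, e2, e3]
  ring

lemma srg_of_count {F : Type*} [Field F] [Fintype F] (D : Finset F) (h0 : (0 : F) ∉ D)
    (hneg : ∀ d ∈ D, -d ∈ D) (l μ : ℕ)
    (hl : ∀ w ∈ D, (D.filter fun d => w - d ∈ D).card = l)
    (hμ : ∀ w, w ≠ 0 → w ∉ D → (D.filter fun d => w - d ∈ D).card = μ) :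
    (SimpleGraph.fromRel fun x y : F => x - y ∈ D).IsSRGWith (Fintype.card F) D.card l μ := by
  set G := SimpleGraph.fromRel fun x y : F => x - y ∈ D with hG
  have hneg' : ∀ x y : F, x - y ∈ D → y - x ∈ D := fun x y h => by
    have := hneg _ h; rwa [neg_sub] at this
  have adj : ∀ x y, G.Adj x y ↔ x - y ∈ D := by
    intro x y
    rw [hG, SimpleGraph.fromRel_adj]
    constructor
    · rintro ⟨-, h | h⟩
      · exact h
      · exact hneg' _ _ h
    · intro h
      refine ⟨?_, Or.inl h⟩
      rintro rfl
      rw [sub_self] at h; exact h0 h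
  have hcn : ∀ v w, Fintype.card (G.commonNeighbors v w) =
      (D.filter fun d => (v - w) - d ∈ D).card := by
    intro v w
    rw [← Set.toFinset_card]
    refine Finset.card_bij' (fun z _ => v - z) (fun d _ => v - d) ?_ ?_ ?_ ?_
    · intro z hz
      simp only [Set.mem_toFinset, SimpleGraph.mem_commonNeighbors, adj] at hz
      rw [Finset.mem_filter]
      refine ⟨hz.1, ?_⟩
      rw [show v - w - (v - z) = z - w by ring]
      exact hneg' _ _ hz.2
    · intro d hd
      rw [Finset.mem_filter] at hd
      simp only [Set.mem_toFinset, SimpleGraph.mem_commonNeighbors, adj]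
      refine ⟨by rw [sub_sub_cancel]; exact hd.1, ?_⟩
      apply hneg'
      rw [show v - d - w = v - w - d by ring]; exact hd.2
    · intros; simp
    · intros; simp
  refine ⟨rfl, ?_, ?_, ?_⟩
  · intro v
    rw [← SimpleGraph.card_neighborFinset_eq_degree]
    refine Finset.card_bij' (fun z _ => v - z) (fun d _ => v - d) ?_ ?_ ?_ ?_
    · intro z hz
      exact (adj _ _).1 ((SimpleGraph.mem_neighborFinset _ _ _).1 hz)
    · intro d hd
      exact (SimpleGraph.mem_neighborFinset _ _ _).2 ((adj _ _).2 (by rwa [sub_sub_cancel]))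
    · intros; simp
    · intros; simp
  · intro v w h
    rw [hcn]; exact hl _ ((adj _ _).1 h)
  · intro v w hne h
    rw [hcn]; exact hμ _ (sub_ne_zero.2 hne) (fun h' => h ((adj _ _).2 h'))

theorem stmt_6 (p : ℕ) [Fact p.Prime] (N : ℕ) (hN : 2 < N)
    (j : ℕ) (hj : 0 < j) (hpj : (p : ZMod N) ^ j = -1)
    (hmin : ∀ j' : ℕ, 0 < j' → j' < j → (p : ZMod N) ^ j' ≠ -1)
    (s : ℕ) (hs : 0 < s) (f : ℕ) (hf : f = 2 * j * s)
    {F : Type*} [Field F] [Fintype F] (hcard : Fintype.card F = p ^ f)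
    (ω : F) (hω : ∀ x : F, x ≠ 0 → ∃ k : ℕ, x = ω ^ k)
    (u ε c : ℤ) (hu : u = (p : ℤ) ^ (j * s)) (hε : ε = (-1 : ℤ) ^ s)
    (hc : (N : ℤ) * c = u - ε) :
    ∃ k l μ : ℕ,
      (SimpleGraph.fromRel fun x y : F => x - y ∈ cycl ω N 0).IsSRGWith
        (Fintype.card F) k l μ ∧
      (k : ℤ) = c * (u + ε) ∧
      (l : ℤ) = -ε * u + c ^ 2 + 3 * ε * c ∧
      (μ : ℤ) = c ^ 2 + ε * c := by
  have hpp : p.Prime := Fact.out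
  have : CharP F p := charP_of_card_eq_prime_pow hcard
  set Q := p ^ j with hQ
  have hQ2 : 2 ≤ Q := hpp.two_le.trans (Nat.le_self_pow hj.ne' p)
  have hu' : u = (Q : ℤ) ^ s := by rw [hu, hQ, pow_mul]; push_cast; rfl
  have hqn : Fintype.card F = (Q ^ 2) ^ s := by
    rw [hcard, hf, hQ, ← pow_mul, ← pow_mul]; congr 1; ring
  have hq : (Fintype.card F : ℤ) = u ^ 2 := by
    rw [hqn, hu']; push_cast; rw [← pow_mul, ← pow_mul, mul_comm]
  have hd : (Q - 1) * (Q + 1) ∣ Fintype.card Fˣ := by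
    rw [Fintype.card_units, hqn]
    have h1 : (Q - 1) * (Q + 1) = Q ^ 2 - 1 := by
      have := Nat.sq_sub_sq Q 1
      rw [one_pow] at this
      rw [this, mul_comm]
    rw [h1]
    simpa using Nat.sub_dvd_pow_sub_pow (Q ^ 2) 1 s
  have hdQ : Q + 1 ∣ Fintype.card Fˣ := (Dvd.intro_left _ rfl).trans hd
  have hε2 : ε ^ 2 = 1 := by rw [hε, ← pow_mul, mul_comm, pow_mul]; simp
  have hdu : (Q : ℤ) + 1 ∣ u - ε := by
    rw [hu', hε]
    simpa using sub_dvd_pow_sub_pow (Q : ℤ) (-1) s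
  have hNQ : N ∣ Q + 1 := by
    rw [← ZMod.natCast_eq_zero_iff, hQ]
    push_cast
    rw [hpj]; ring
  have hdN : N ∣ Fintype.card Fˣ := hNQ.trans hdQ
  have hm1 : (-1 : Fˣ) ∈ Pw F (Q + 1) := by
    apply pw_of_pow Q hQ2 hd
    rcases hpp.eq_two_or_odd' with h2 | ho
    · subst h2
      have : (-1 : Fˣ) = 1 := by
        ext
        have := CharTwo.neg_eq (1 : F)
        simpa using this
      rw [this, one_pow]
    · apply Even.neg_one_pow
      have : Odd Q := ho.pow
      exact this.tsub_odd odd_one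
  obtain ⟨ψ, hprim, hfr, hint⟩ := exists_char p (F := F)
  have hψ : ∀ z, ψ (z ^ Q) = ψ z := char_frob p ψ hfr j
  have hev := eta_vals p ψ hprim j Q hQ hQ2 hψ hint hm1 hd u ε c hε2 hdu hq N (by omega) hNQ hc
  -- the connection set
  set D := cycl ω N 0 with hD
  have hω0 : ω ≠ 0 := by
    rintro rfl
    have hsub : (Finset.univ : Finset F) ⊆ {0, 1} := by
      intro x _
      by_cases hx : x = 0
      · simp [hx]
      obtain ⟨k, rfl⟩ := hω x hx
      rcases Nat.eq_zero_or_pos k with rfl | hk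
      · simp
      · simp [zero_pow hk.ne']
    have h1 := (Finset.card_le_card hsub).trans Finset.card_le_two
    rw [Finset.card_univ, hqn] at h1
    have h2 : Q ^ 2 ≤ (Q ^ 2) ^ s := Nat.le_self_pow hs.ne' _
    nlinarith
  have hDP : D = (Pw F N).map ⟨Units.val, Units.val_injective⟩ := by
    ext x
    simp only [hD, cycl, Finset.mem_filter, Finset.mem_univ, true_and, zero_add, Finset.mem_map,
      Function.Embedding.coeFn_mk, mem_Pw]
    constructor
    · rintro ⟨k, rfl⟩
      exact ⟨(Units.mk0 ω hω0) ^ (N * k), ⟨(Units.mk0 ω hω0) ^ k, by rw [← pow_mul, mul_comm]⟩,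
        by simp⟩
    · rintro ⟨_, ⟨y, rfl⟩, rfl⟩
      obtain ⟨k, hk⟩ := hω y y.ne_zero
      exact ⟨k, by rw [Units.val_pow_eq_pow_val, hk, ← pow_mul, mul_comm]⟩
  have memD : ∀ x : Fˣ, (x : F) ∈ D ↔ x ∈ Pw F N := by
    intro x
    rw [hDP]
    simp
  have h0D : (0 : F) ∉ D := by
    rw [hDP]; simp
  have hnegD : ∀ d ∈ D, -d ∈ D := by
    intro d hd'
    have hne : d ≠ 0 := fun h => h0D (h ▸ hd')
    have h1 := (memD (Units.mk0 d hne)).1 hd'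
    have h2 := (memD _).2 (Pw_mul (Pw_mono hNQ hm1) h1)
    simpa using h2
  have hsumD : ∀ a : F, ∑ d ∈ D, ψ (a * d) = eta ψ N a := by
    intro a
    rw [hDP, Finset.sum_map]; rfl
  have hcardD : D.card = (Pw F N).card := by rw [hDP, Finset.card_map]
  have hNZ : (N : ℤ) ≠ 0 := by exact_mod_cast (by omega : N ≠ 0)
  have hk : (D.card : ℤ) = c * (u + ε) := by
    have h1 := card_Pw (F := F) N hdN
    rw [← hcardD] at h1
    have h2 : (Fintype.card Fˣ : ℤ) = N * D.card := by exact_mod_cast h1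
    have h3 : (Fintype.card F : ℤ) = Fintype.card Fˣ + 1 := by
      exact_mod_cast Fintype.card_eq_card_units_add_one (α := F)
    apply mul_left_cancel₀ hNZ
    linear_combination -h2 - h3 + hq - (u + ε) * hc + hε2
  have hupos : 0 < u := by rw [hu]; have := hpp.pos; positivity
  have hT : ∀ w : F, w ≠ 0 → ((D.filter fun d => w - d ∈ D).card : ℤ) =
      c ^ 2 + ε * c + (2 * ε * c - ε * u) * (if w ∈ D then 1 else 0) := by
    intro w hw
    have h1 := count_T ψ hprim D (ε * c) (ε * c - ε * u) (by
      intro a ha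
      rw [hsumD]
      exact hev (Units.mk0 a ha)) w hw
    have h2 : (Fintype.card F : ℤ) * ((D.filter fun d => w - d ∈ D).card -
        (ε * c + (ε * c - ε * u)) * (if w ∈ D then 1 else 0)) =
        (D.card - ε * c) * (D.card - (ε * c - ε * u)) := by
      have h3 : ((if w ∈ D then 1 else 0 : ℤ) : ℂ) = if w ∈ D then 1 else 0 := by
        split_ifs <;> simp
      apply Int.cast_injective (α := ℂ)
      push_cast
      push_cast at h3
      exact h1
    rw [hq, hk] at h2
    have hu2 : u ^ 2 ≠ 0 := by positivity
    apply mul_left_cancel₀ hu2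
    linear_combination h2
  have hε1 : ε = 1 ∨ ε = -1 := by
    have h : (ε - 1) * (ε + 1) = 0 := by linear_combination hε2
    rcases mul_eq_zero.1 h with h | h
    · left; linarith
    · right; linarith
  have hμ0 : 0 ≤ c ^ 2 + ε * c := by
    rcases hε1 with h | h <;> rw [h]
    · rcases le_or_gt 0 c with h | h <;> nlinarith
    · rcases le_or_gt 1 c with h | h <;> nlinarith
  have h1D : (1 : F) ∈ D := (memD 1).2 (mem_Pw.2 ⟨1, one_pow _⟩)
  have hl0 : 0 ≤ -ε * u + c ^ 2 + 3 * ε * c := by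
    have := hT 1 one_ne_zero
    rw [if_pos h1D] at this
    have h2 : (0 : ℤ) ≤ ((D.filter fun d => 1 - d ∈ D).card : ℤ) := Int.natCast_nonneg _
    rw [this] at h2
    linarith
  refine ⟨D.card, (-ε * u + c ^ 2 + 3 * ε * c).toNat, (c ^ 2 + ε * c).toNat,
    srg_of_count D h0D hnegD _ _ ?_ ?_, hk, Int.toNat_of_nonneg hl0, Int.toNat_of_nonneg hμ0⟩
  · intro w hw
    have h1 := hT w (fun h => h0D (h ▸ hw))
    rw [if_pos hw] at h1
    have h2 := Int.toNat_of_nonneg hl0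
    zify
    rw [h1, h2]; ring
  · intro w hw hw'
    have h1 := hT w hw
    rw [if_neg hw'] at h1
    have h2 := Int.toNat_of_nonneg hμ0
    zify
    rw [h1, h2]; ring
end
end

section
/- Let m be a positive integer and q₁,…,q_s prime powers with 2m | q_i+1 for all i. Let G = G₁ × ⋯ × G_s with G_i elementary abelian of order q_i⁴, and u = q₁²⋯q_s². Then there exists a strongly regular Cayley graph on G with negative Latin square type parameters (u², c(u+1), −u+c²+3c, c²+c) where c = (u−1)/m; moreover G∖{0} can be partitioned into m such connection sets, and any union of i of them (1 ≤ i ≤ m) is again a partial difference set with c = i(u−1)/m. -/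
open scoped Classical

set_option linter.unusedSimpArgs false
set_option linter.unusedVariables false

structure Blk (m u : ℕ) (G : Type*) [AddCommGroup G] [Fintype G] where
  B : G → G → ℂ
  B_add : ∀ x x' y, B (x + x') y = B x y * B x' y
  B_zl : ∀ y, B 0 y = 1
  B_zr : ∀ x, B x 0 = 1
  sum_l : ∀ y, y ≠ 0 → ∑ x, B x y = 0
  sum_r : ∀ x, x ≠ 0 → ∑ y, B x y = 0
  card_eq : Fintype.card G = u ^ 2
  a : G → ℂ
  b : G → ℂ
  c : G → ℂ
  d : G → ℂ
  a' : G → ℂ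
  b' : G → ℂ
  c' : G → ℂ
  d' : G → ℂ
  prim : ∀ x, (x = 0 ∧ a x = 0 ∧ b x = 0 ∧ c x ^ m = 1 ∧ d x ^ m = 1) ∨
    (x ≠ 0 ∧ a x ^ m = 1 ∧ b x = 0 ∧ c x ^ m = 1 ∧ d x = 0) ∨
    (x ≠ 0 ∧ a x = 0 ∧ b x ^ m = 1 ∧ c x = 0 ∧ d x ^ m = 1)
  dual : ∀ x, (x = 0 ∧ a' x = 0 ∧ b' x = 0 ∧ c' x ^ m = 1 ∧ d' x ^ m = 1) ∨
    (x ≠ 0 ∧ a' x ^ m = 1 ∧ b' x = 0 ∧ c' x = 0 ∧ d' x ^ m = 1) ∨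
    (x ≠ 0 ∧ a' x = 0 ∧ b' x ^ m = 1 ∧ c' x ^ m = 1 ∧ d' x = 0)
  neg_a : ∀ x, a (-x) = a x
  neg_b : ∀ x, b (-x) = b x
  neg_c : ∀ x, c (-x) = c x
  neg_d : ∀ x, d (-x) = d x
  Ta : ∀ t, 0 < t → t < m → ∀ y, ∑ x, a x ^ t * B x y = -u * a' y ^ t
  Tb : ∀ t, 0 < t → t < m → ∀ y, ∑ x, b x ^ t * B x y = -u * b' y ^ t
  Tc : ∀ t, 0 < t → t < m → ∀ y, ∑ x, c x ^ t * B x y = u * c' y ^ t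
  Td : ∀ t, 0 < t → t < m → ∀ y, ∑ x, d x ^ t * B x y = u * d' y ^ t

theorem add_pow_disj (p q : ℂ) (t : ℕ) (ht : 0 < t) (h : p * q = 0) :
    (p + q) ^ t = p ^ t + q ^ t := by
  rcases mul_eq_zero.1 h with h | h <;> simp [h, ht.ne']

theorem sum_prod_tensor {G H : Type*} [Fintype G] [Fintype H] (f : G → ℂ) (g : H → ℂ) :
    ∑ x : G × H, f x.1 * g x.2 = (∑ x, f x) * ∑ y, g y := by
  rw [Fintype.sum_prod_type, Finset.sum_mul_sum]

theorem comb {G H : Type*} [Fintype G] [Fintype H] (p1 r1 B1 : G → ℂ) (p2 r2 B2 : H → ℂ)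
    (t : ℕ) (ht : 0 < t) (hd : ∀ x y, (p1 x * p2 y) * (r1 x * r2 y) = 0)
    (P1 R1 P2 R2 e1 e2 e3 e4 w: ℂ) (hD : (P1 * P2) * (R1 * R2) = 0)
    (h1 : ∑ x, p1 x ^ t * B1 x = e1 * P1 ^ t)
    (h2 : ∑ x, p2 x ^ t * B2 x = e2 * P2 ^ t)
    (h3 : ∑ x, r1 x ^ t * B1 x = e3 * R1 ^ t)
    (h4 : ∑ x, r2 x ^ t * B2 x = e4 * R2 ^ t) (hw : e1 * e2 = w) (hw' : e3 * e4 = w) :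
    ∑ x : G × H, (p1 x.1 * p2 x.2 + r1 x.1 * r2 x.2) ^ t * (B1 x.1 * B2 x.2) =
      w * (P1 * P2 + R1 * R2) ^ t := by
  rw [add_pow_disj _ _ t ht hD]
  have : ∀ x : G × H, (p1 x.1 * p2 x.2 + r1 x.1 * r2 x.2) ^ t * (B1 x.1 * B2 x.2) =
      (p1 x.1 ^ t * B1 x.1) * (p2 x.2 ^ t * B2 x.2) +
      (r1 x.1 ^ t * B1 x.1) * (r2 x.2 ^ t * B2 x.2) := by
    intro x
    rw [add_pow_disj _ _ t ht (hd _ _)]; ring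
  simp_rw [this]
  rw [Finset.sum_add_distrib, sum_prod_tensor (fun x => p1 x ^ t * B1 x) (fun x => p2 x ^ t * B2 x),
    sum_prod_tensor (fun x => r1 x ^ t * B1 x) (fun x => r2 x ^ t * B2 x), h1, h2, h3, h4]
  linear_combination (P1^t*P2^t)*hw + (R1^t*R2^t)*hw'

noncomputable def Blk.prod {m u v : ℕ} (hm : 0 < m) {G H : Type*} [AddCommGroup G] [Fintype G]
    [AddCommGroup H] [Fintype H] (X : Blk m u G) (Y : Blk m v H) : Blk m (u * v) (G × H) where
  B x y := X.B x.1 y.1 * Y.B x.2 y.2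
  B_add x x' y := by simp only [Prod.fst_add, Prod.snd_add, X.B_add, Y.B_add]; ring
  B_zl y := by simp [X.B_zl, Y.B_zl]
  B_zr y := by simp [X.B_zr, Y.B_zr]
  sum_l y hy := by
    rw [sum_prod_tensor (fun x => X.B x y.1) (fun x => Y.B x y.2)]
    by_cases h : y.1 = 0
    · have h2 : y.2 ≠ 0 := fun h2 => hy (Prod.ext h h2)
      rw [Y.sum_l _ h2, mul_zero]
    · rw [X.sum_l _ h, zero_mul]
  sum_r x hx := by
    rw [sum_prod_tensor (fun y => X.B x.1 y) (fun y => Y.B x.2 y)]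
    by_cases h : x.1 = 0
    · have h2 : x.2 ≠ 0 := fun h2 => hx (Prod.ext h h2)
      rw [Y.sum_r _ h2, mul_zero]
    · rw [X.sum_r _ h, zero_mul]
  card_eq := by rw [Fintype.card_prod, X.card_eq, Y.card_eq, mul_pow]
  a x := X.a x.1 * Y.c x.2 + X.d x.1 * Y.a x.2
  b x := X.b x.1 * Y.d x.2 + X.c x.1 * Y.b x.2
  c x := X.c x.1 * Y.c x.2 + X.b x.1 * Y.a x.2
  d x := X.d x.1 * Y.d x.2 + X.a x.1 * Y.b x.2
  a' x := X.a' x.1 * Y.c' x.2 + X.d' x.1 * Y.a' x.2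
  b' x := X.b' x.1 * Y.d' x.2 + X.c' x.1 * Y.b' x.2
  c' x := X.c' x.1 * Y.c' x.2 + X.b' x.1 * Y.a' x.2
  d' x := X.d' x.1 * Y.d' x.2 + X.a' x.1 * Y.b' x.2
  prim x := by
    obtain ⟨x, y⟩ := x
    rcases X.prim x with ⟨h0, h1, h2, h3, h4⟩ | ⟨h0, h1, h2, h3, h4⟩ | ⟨h0, h1, h2, h3, h4⟩ <;>
    rcases Y.prim y with ⟨k0, k1, k2, k3, k4⟩ | ⟨k0, k1, k2, k3, k4⟩ | ⟨k0, k1, k2, k3, k4⟩ <;>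
    (try subst h0) <;> (try subst k0) <;> simp [*, mul_pow, hm.ne']
  dual x := by
    obtain ⟨x, y⟩ := x
    rcases X.dual x with ⟨h0, h1, h2, h3, h4⟩ | ⟨h0, h1, h2, h3, h4⟩ | ⟨h0, h1, h2, h3, h4⟩ <;>
    rcases Y.dual y with ⟨k0, k1, k2, k3, k4⟩ | ⟨k0, k1, k2, k3, k4⟩ | ⟨k0, k1, k2, k3, k4⟩ <;>
    (try subst h0) <;> (try subst k0) <;> simp [*, mul_pow, hm.ne']
  neg_a x := by simp [X.neg_a, X.neg_b, X.neg_c, X.neg_d, Y.neg_a, Y.neg_b, Y.neg_c, Y.neg_d]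
  neg_b x := by simp [X.neg_a, X.neg_b, X.neg_c, X.neg_d, Y.neg_a, Y.neg_b, Y.neg_c, Y.neg_d]
  neg_c x := by simp [X.neg_a, X.neg_b, X.neg_c, X.neg_d, Y.neg_a, Y.neg_b, Y.neg_c, Y.neg_d]
  neg_d x := by simp [X.neg_a, X.neg_b, X.neg_c, X.neg_d, Y.neg_a, Y.neg_b, Y.neg_c, Y.neg_d]
  Ta t h0 h1 y := by
    refine comb X.a X.d (fun x => X.B x y.1) Y.c Y.a (fun x => Y.B x y.2) t h0 ?_ _ _ _ _ _ _ _ _ _ ?_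
      (X.Ta t h0 h1 y.1) (Y.Tc t h0 h1 y.2) (X.Td t h0 h1 y.1) (Y.Ta t h0 h1 y.2)
      (by push_cast; ring) (by push_cast; ring)
    · intro x y; rcases X.prim x with ⟨-, h⟩ | ⟨-, h⟩ | ⟨-, h⟩ <;> simp [h]
    · rcases Y.dual y.2 with ⟨-, h⟩ | ⟨-, h⟩ | ⟨-, h⟩ <;> simp [h]
  Tb t h0 h1 y := by
    refine comb X.b X.c (fun x => X.B x y.1) Y.d Y.b (fun x => Y.B x y.2) t h0 ?_ _ _ _ _ _ _ _ _ _ ?_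
      (X.Tb t h0 h1 y.1) (Y.Td t h0 h1 y.2) (X.Tc t h0 h1 y.1) (Y.Tb t h0 h1 y.2)
      (by push_cast; ring) (by push_cast; ring)
    · intro x y; rcases X.prim x with ⟨-, h⟩ | ⟨-, h⟩ | ⟨-, h⟩ <;> simp [h]
    · rcases Y.dual y.2 with ⟨-, h⟩ | ⟨-, h⟩ | ⟨-, h⟩ <;> simp [h]
  Tc t h0 h1 y := by
    refine comb X.c X.b (fun x => X.B x y.1) Y.c Y.a (fun x => Y.B x y.2) t h0 ?_ _ _ _ _ _ _ _ _ _ ?_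
      (X.Tc t h0 h1 y.1) (Y.Tc t h0 h1 y.2) (X.Tb t h0 h1 y.1) (Y.Ta t h0 h1 y.2)
      (by push_cast; ring) (by push_cast; ring)
    · intro x y; rcases X.prim x with ⟨-, h⟩ | ⟨-, h⟩ | ⟨-, h⟩ <;> simp [h]
    · rcases Y.dual y.2 with ⟨-, h⟩ | ⟨-, h⟩ | ⟨-, h⟩ <;> simp [h]
  Td t h0 h1 y := by
    refine comb X.d X.a (fun x => X.B x y.1) Y.d Y.b (fun x => Y.B x y.2) t h0 ?_ _ _ _ _ _ _ _ _ _ ?_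
      (X.Td t h0 h1 y.1) (Y.Td t h0 h1 y.2) (X.Ta t h0 h1 y.1) (Y.Tb t h0 h1 y.2)
      (by push_cast; ring) (by push_cast; ring)
    · intro x y; rcases X.prim x with ⟨-, h⟩ | ⟨-, h⟩ | ⟨-, h⟩ <;> simp [h]
    · rcases Y.dual y.2 with ⟨-, h⟩ | ⟨-, h⟩ | ⟨-, h⟩ <;> simp [h]

noncomputable def Blk.equiv {m u : ℕ} {G H : Type*} [AddCommGroup G] [Fintype G]
    [AddCommGroup H] [Fintype H] (X : Blk m u G) (e : H ≃+ G) : Blk m u H where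
  B x y := X.B (e x) (e y)
  B_add x x' y := by simp [X.B_add]
  B_zl y := by simp [X.B_zl]
  B_zr y := by simp [X.B_zr]
  sum_l y hy := by
    exact (e.toEquiv.sum_comp (fun x => X.B x (e y))).trans (X.sum_l _ (by simpa using hy))
  sum_r y hy := by
    exact (e.toEquiv.sum_comp (fun x => X.B (e y) x)).trans (X.sum_r _ (by simpa using hy))
  card_eq := by rw [Fintype.card_congr e.toEquiv, X.card_eq]
  a x := X.a (e x)
  b x := X.b (e x)
  c x := X.c (e x)
  d x := X.d (e x)
  a' x := X.a' (e x)
  b' x := X.b' (e x)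
  c' x := X.c' (e x)
  d' x := X.d' (e x)
  prim x := by simpa using X.prim (e x)
  dual x := by simpa using X.dual (e x)
  neg_a x := by simp [X.neg_a]
  neg_b x := by simp [X.neg_b]
  neg_c x := by simp [X.neg_c]
  neg_d x := by simp [X.neg_d]
  Ta t h0 h1 y := by
    rw [← X.Ta t h0 h1, ← e.toEquiv.sum_comp]; rfl
  Tb t h0 h1 y := by
    rw [← X.Tb t h0 h1, ← e.toEquiv.sum_comp]; rfl
  Tc t h0 h1 y := by
    rw [← X.Tc t h0 h1, ← e.toEquiv.sum_comp]; rfl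
  Td t h0 h1 y := by
    rw [← X.Td t h0 h1, ← e.toEquiv.sum_comp]; rfl

noncomputable def Blk.triv {m : ℕ} (hm : 0 < m) {G : Type*} [AddCommGroup G] [Fintype G]
    [hs : Subsingleton G] : Blk m 1 G where
  B x y := 1
  B_add x x' y := by simp
  B_zl y := rfl
  B_zr y := rfl
  sum_l y hy := absurd (Subsingleton.elim _ _) hy
  sum_r y hy := absurd (Subsingleton.elim _ _) hy
  card_eq := by rw [one_pow, Fintype.card_eq_one_iff]; exact ⟨0, fun _ => Subsingleton.elim _ _⟩
  a x := 0
  b x := 0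
  c x := 1
  d x := 1
  a' x := 0
  b' x := 0
  c' x := 1
  d' x := 1
  prim x := by simp [Subsingleton.elim x 0]
  dual x := by simp [Subsingleton.elim x 0]
  neg_a x := rfl
  neg_b x := rfl
  neg_c x := rfl
  neg_d x := rfl
  Ta t h0 h1 y := by simp [h0.ne']
  Tb t h0 h1 y := by simp [h0.ne']
  Tc t h0 h1 y := by
    have : Fintype.card G = 1 := by
      rw [Fintype.card_eq_one_iff]; exact ⟨0, fun _ => Subsingleton.elim _ _⟩
    simp [this]
  Td t h0 h1 y := by
    have : Fintype.card G = 1 := by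
      rw [Fintype.card_eq_one_iff]; exact ⟨0, fun _ => Subsingleton.elim _ _⟩
    simp [this]

theorem Blk.pi {m : ℕ} (hm : 0 < m) : ∀ (s : ℕ) (F : Fin s → Type*) [∀ i, AddCommGroup (F i)]
    [∀ i, Fintype (F i)] (u : Fin s → ℕ), (∀ i, Nonempty (Blk m (u i) (F i))) →
    Nonempty (Blk m (∏ i, u i) (∀ i, F i))
  | 0, F, _, _, u, h => by
    simp only [Finset.univ_eq_empty, Finset.prod_empty]
    exact ⟨Blk.triv hm⟩
  | s + 1, F, _, _, u, h => by
    obtain ⟨X⟩ := h 0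
    obtain ⟨Y⟩ := Blk.pi hm s (fun i => F i.succ) (fun i => u i.succ) (fun i => h i.succ)
    rw [Fin.prod_univ_succ]
    refine ⟨(X.prod hm Y).equiv
      { toFun := fun f => (f 0, fun i => f i.succ)
        invFun := fun p => Fin.cons p.1 p.2
        left_inv := fun f => ?_
        right_inv := fun p => ?_
        map_add' := fun f g => rfl }⟩
    · funext i
      refine Fin.cases ?_ (fun i => ?_) i <;> simp
    · ext <;> simp

set_option linter.unusedSimpArgs false
set_option linter.unusedVariables false

section base
set_option linter.unusedSectionVars false
variable {K : Type*} [Field K] [Fintype K]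

theorem exists_psi (q : ℕ) (hq : 2 ≤ q) (hK : Fintype.card K = q ^ 2) :
    ∃ ψ : AddChar K ℂ, ψ ≠ 1 ∧ ∀ χ : MulChar K ℂ, χ ≠ 1 → χ ^ (q + 1) = 1 →
      gaussSum χ ψ = q := by
  obtain ⟨p, hp⟩ := CharP.exists K
  obtain ⟨n, hpp, hn⟩ := FiniteField.card K p
  have : Fact p.Prime := ⟨hpp⟩
  obtain ⟨k, -, hk⟩ : ∃ k ≤ (n : ℕ), q = p ^ k := by
    rw [← Nat.dvd_prime_pow hpp, ← hn, hK]; exact Dvd.intro_left q (by ring)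
  have hadd : ∀ x y : K, (x + y) ^ q = x ^ q + y ^ q := by
    intro x y; rw [hk]; exact add_pow_char_pow x y p k
  have hfr : ∀ x : K, x ^ q ^ 2 = x := by
    intro x; rw [← hK]; exact FiniteField.pow_card x
  have hfr' : ∀ x : K, (x ^ q) ^ q = x := by
    intro x; rw [← pow_mul, ← sq, hfr]
  have hneg : ∀ x : K, (-x) ^ q = - x ^ q := by
    intro x
    have := hadd x (-x)
    rw [add_neg_cancel, zero_pow (by omega)] at this
    exact (neg_eq_of_add_eq_zero_right this.symm).symm
  obtain ⟨g, hg⟩ := IsCyclic.exists_generator (α := Kˣ)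
  have hord : orderOf g = q ^ 2 - 1 := by
    rw [orderOf_eq_card_of_forall_mem_zpowers hg, Nat.card_eq_fintype_card, Fintype.card_units, hK]
  have hprim : IsPrimitiveRoot (g : K) (q ^ 2 - 1) := by
    rw [IsPrimitiveRoot.coe_units_iff, ← hord]; exact IsPrimitiveRoot.orderOf g
  have hfac : q ^ 2 - 1 = (q + 1) * (q - 1) := by
    simpa using Nat.sq_sub_sq q 1
  have hq1 : 0 < q - 1 := by omega
  have hpos : 0 < q ^ 2 - 1 := by rw [hfac]; positivity
  have hprim2 : IsPrimitiveRoot ((g : K) ^ (q + 1)) (q - 1) := hprim.pow hpos hfac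
  have hmem : ∀ x : K, x ≠ 0 → (x ^ q = x ↔ x ^ (q - 1) = 1) := by
    intro x hx
    have : x ^ q = x ^ (q - 1) * x := by rw [← pow_succ]; congr 1; omega
    rw [this]
    constructor
    · intro h; exact mul_right_cancel₀ hx (by rw [h, one_mul])
    · intro h; rw [h, one_mul]
  set S : Finset K := Finset.univ.filter fun c => c ^ q = c ∧ c ≠ 0 with hS
  have hScard : S.card = q - 1 := by
    rw [← hprim2.card_nthRootsFinset]
    congr 1
    ext x
    rw [Polynomial.mem_nthRootsFinset hq1]
    simp only [hS, Finset.mem_filter, Finset.mem_univ, true_and]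
    constructor
    · rintro ⟨h1, h2⟩; exact (hmem x h2).1 h1
    · intro h
      have h2 : x ≠ 0 := by rintro rfl; rw [zero_pow hq1.ne'] at h; exact zero_ne_one h
      exact ⟨(hmem x h2).2 h, h2⟩
  have hx0 : (g : K) - (g : K) ^ q ≠ 0 := by
    intro h
    have h2 : (g : K) ^ (q - 1) = 1 := (hmem _ g.ne_zero).1 (sub_eq_zero.1 h).symm
    have h3 := Nat.le_of_dvd hq1 (hprim.dvd_of_pow_eq_one _ h2)
    rw [hfac] at h3
    nlinarith
  obtain ⟨ψ1, hψ1⟩ := AddChar.exists_apply_ne_zero.2 hx0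
  let φ : K →+ K := AddMonoidHom.mk' (fun x => x - x ^ q) (by intro x y; simp only [hadd]; ring)
  have hφ : ∀ x, φ x = x - x ^ q := fun x => rfl
  refine ⟨ψ1.compAddMonoidHom φ, ?_, ?_⟩
  · intro h
    apply hψ1
    have := DFunLike.congr_fun h (g : K)
    simpa [hφ] using this
  intro χ hχ hχq
  set ψ := ψ1.compAddMonoidHom φ with hψ
  have hψa : ∀ x, ψ x = ψ1 (x - x ^ q) := fun x => rfl
  have htriv : ∀ c ∈ S, χ c = 1 := by
    intro c hc
    simp only [hS, Finset.mem_filter, Finset.mem_univ, true_and] at hc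
    have : NeZero (q - 1) := ⟨hq1.ne'⟩
    obtain ⟨i, -, hi⟩ := hprim2.eq_pow_of_pow_eq_one ((hmem c hc.2).1 hc.1)
    rw [← hi, map_pow, map_pow, ← MulChar.pow_apply' χ (by omega), hχq, MulChar.one_apply_coe,
      one_pow]
  have h1 : ∀ c ∈ S, ∑ a, χ a * ψ (c * a) = gaussSum χ ψ := by
    intro c hc
    have hc0 : c ≠ 0 := by
      simp only [hS, Finset.mem_filter, Finset.mem_univ, true_and] at hc; exact hc.2
    rw [gaussSum, ← Equiv.sum_comp (Equiv.mulLeft₀ c hc0) (fun a => χ a * ψ a)]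
    refine Finset.sum_congr rfl fun a _ => ?_
    simp [htriv c hc]
  have h2 : ∀ a, 1 + ∑ c ∈ S, ψ (c * a) = if a ^ q = a then (q : ℂ) else 0 := by
    intro a
    have e : ∀ c ∈ S, ψ (c * a) = ψ1 (c * (a - a ^ q)) := by
      intro c hc
      simp only [hS, Finset.mem_filter, Finset.mem_univ, true_and] at hc
      rw [hψa, mul_pow, hc.1]; congr 1; ring
    rw [Finset.sum_congr rfl e]
    split_ifs with ha
    · simp only [ha, sub_self, mul_zero, AddChar.map_zero_eq_one]
      rw [Finset.sum_const, hScard, nsmul_eq_mul, mul_one, Nat.cast_sub (by omega)]; simp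
    · have hz : a - a ^ q ≠ 0 := fun h => ha (sub_eq_zero.1 h).symm
      set T : Finset K := Finset.univ.filter fun c => c ^ q = c with hT
      have hTS : ∑ c ∈ T, ψ1 (c * (a - a ^ q)) = 1 + ∑ c ∈ S, ψ1 (c * (a - a ^ q)) := by
        have h0 : (0 : K) ∈ T := by simp [hT]; omega
        rw [← Finset.add_sum_erase T _ h0]
        congr 1
        · simp
        · apply Finset.sum_congr _ (fun _ _ => rfl)
          ext x; simp [hS, hT, and_comm]
      rw [← hTS]
      set r : K := ((g : K) - (g : K) ^ q) / (a - a ^ q) with hr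
      have hrT : r ^ q = r := by
        have hz' : ∀ x : K, (x - x ^ q) ^ q = -(x - x ^ q) := by
          intro x
          rw [sub_eq_add_neg, hadd, hneg, hfr']; ring
        rw [hr, div_pow, hz', hz', neg_div_neg_eq]
      have hsh : ∑ c ∈ T, ψ1 (c * (a - a ^ q)) = ∑ c ∈ T, ψ1 ((c + r) * (a - a ^ q)) := by
        symm
        refine Finset.sum_bij' (fun c _ => c + r) (fun c _ => c - r) ?_ ?_ ?_ ?_ ?_
        · intro c hc
          simp only [hT, Finset.mem_filter, Finset.mem_univ, true_and] at hc ⊢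
          rw [hadd, hc, hrT]
        · intro c hc
          simp only [hT, Finset.mem_filter, Finset.mem_univ, true_and] at hc ⊢
          rw [sub_eq_add_neg, hadd, hneg, hc, hrT]
        · intros; simp
        · intros; simp
        · intros; rfl
      have hre : r * (a - a ^ q) = (g : K) - (g : K) ^ q := div_mul_cancel₀ _ hz
      simp_rw [add_mul, hre, AddChar.map_add_eq_mul] at hsh
      rw [← Finset.sum_mul] at hsh
      by_contra hne
      apply hψ1
      exact mul_left_cancel₀ hne (by rw [← hsh, mul_one])
  have h3 : ∑ c ∈ S, ∑ a, χ a * ψ (c * a) = (q - 1) * gaussSum χ ψ := by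
    rw [Finset.sum_congr rfl h1, Finset.sum_const, hScard, nsmul_eq_mul, Nat.cast_sub (by omega)]
    simp
  rw [Finset.sum_comm] at h3
  have h4 : ∀ a, ∑ c ∈ S, χ a * ψ (c * a) =
      q * (if a ∈ S then 1 else 0) - χ a := by
    intro a
    rw [← Finset.mul_sum, eq_sub_of_add_eq' (h2 a)]
    by_cases haS : a ∈ S
    · have : a ^ q = a := by
        simp only [hS, Finset.mem_filter, Finset.mem_univ, true_and] at haS; exact haS.1
      rw [if_pos haS, if_pos this, htriv a haS]; ring
    · rw [if_neg haS]
      by_cases ha0 : a = 0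
      · subst ha0; simp [MulChar.map_zero]
      · rw [if_neg]
        · ring
        · intro h; apply haS; simp [hS, h, ha0]
  simp_rw [h4] at h3
  rw [Finset.sum_sub_distrib, MulChar.sum_eq_zero_of_ne_one hχ, ← Finset.mul_sum] at h3
  simp only [Finset.sum_ite_mem, Finset.univ_inter, Finset.sum_const, hScard, nsmul_eq_mul] at h3
  rw [Nat.cast_sub (by omega)] at h3
  have h5 : (q : ℂ) - 1 ≠ 0 := by
    rw [sub_ne_zero]; exact_mod_cast (by omega : q ≠ 1)
  apply mul_left_cancel₀ h5
  rw [← h3]; push_cast; ring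

theorem sq_sum (h2 : ringChar K ≠ 2) (n : K) (hn : ¬ IsSquare n) (f : K → ℂ) :
    ∑ d, f (n * d ^ 2) + ∑ d, f (d ^ 2) = 2 * ∑ e, f e := by
  have hn0 : n ≠ 0 := by rintro rfl; exact hn (IsSquare.zero)
  have hs : ∀ f : K → ℂ, ∑ d, f (d ^ 2) = ∑ e, ((quadraticChar K e : ℤ) + 1 : ℂ) * f e := by
    intro f
    rw [← Finset.sum_fiberwise Finset.univ (fun d : K => d ^ 2) (fun d => f (d ^ 2))]
    refine Finset.sum_congr rfl fun e _ => ?_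
    have h3 := quadraticChar_card_sqrts h2 e
    have h4 : ((quadraticChar K e : ℤ) + 1 : ℂ) = ((Finset.univ.filter fun d : K => d ^ 2 = e).card : ℂ) := by
      have : ((quadraticChar K e : ℤ) + 1 : ℂ) = ((quadraticChar K e + 1 : ℤ) : ℂ) := by push_cast; rfl
      rw [this, ← h3]
      push_cast
      congr 2
      ext x; simp
    rw [h4, ← nsmul_eq_mul, ← Finset.sum_const]
    refine Finset.sum_congr rfl fun d hd => ?_
    rw [(Finset.mem_filter.1 hd).2]
  have hq : ∀ e, quadraticChar K (n * e) = - quadraticChar K e := by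
    intro e
    rw [map_mul, quadraticChar_neg_one_iff_not_isSquare.2 hn]; ring
  have e1 := hs (fun e => f (n * e))
  have e2 := hs f
  have e3 : ∀ g : K → ℂ, ∑ e, g e = ∑ e, g (n * e) :=
    fun g => (Equiv.sum_comp (Equiv.mulLeft₀ n hn0) g).symm
  rw [e1, e2, e3 (fun e => ((quadraticChar K e : ℤ) + 1 : ℂ) * f e), e3 f,
    ← Finset.sum_add_distrib, Finset.mul_sum]
  refine Finset.sum_congr rfl fun e _ => ?_
  simp only [hq]
  push_cast; ring

def QQ (n : K) (w : K × K) : K := w.1 ^ 2 - n * w.2 ^ 2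

theorem QQ_eq_zero (n : K) (hn : ¬ IsSquare n) (w : K × K) : QQ n w = 0 ↔ w = 0 := by
  constructor
  · intro h
    unfold QQ at h
    by_cases h2 : w.2 = 0
    · rw [h2] at h
      have : w.1 = 0 := by simpa using h
      exact Prod.ext this h2
    · exfalso; apply hn
      refine ⟨w.1 / w.2, ?_⟩
      field_simp
      linear_combination -h
  · rintro rfl; simp [QQ]

theorem W_eval (h2 : ringChar K ≠ 2) (n : K) (hn : ¬ IsSquare n) (χ : MulChar K ℂ) (hχ : χ ≠ 1)
    (ψ : AddChar K ℂ) : ∑ w : K × K, χ (QQ n w) * ψ (2 * w.1) = - gaussSum χ ψ ^ 2 := by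
  have h20 : (2 : K) ≠ 0 := Ring.two_ne_zero h2
  have e1 : ∑ w : K × K, χ (w.1 ^ 2 - w.2 ^ 2) * ψ (2 * w.1) = gaussSum χ ψ ^ 2 := by
    rw [gaussSum, sq, Finset.sum_mul_sum, ← Fintype.sum_prod_type']
    refine Finset.sum_bij' (fun w _ => (w.1 + w.2, w.1 - w.2))
      (fun w _ => ((w.1 + w.2) / 2, (w.1 - w.2) / 2)) ?_ ?_ ?_ ?_ ?_
    · intros; simp
    · intros; simp
    · intro w _; ext <;> simp <;> field_simp <;> ring
    · intro w _; ext <;> simp <;> field_simp <;> ring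
    · intro w _
      have : w.1 ^ 2 - w.2 ^ 2 = (w.1 + w.2) * (w.1 - w.2) := by ring
      simp only [this, map_mul]
      have : 2 * w.1 = (w.1 + w.2) + (w.1 - w.2) := by ring
      rw [this, AddChar.map_add_eq_mul]; ring
  rw [eq_neg_iff_add_eq_zero, ← e1, Fintype.sum_prod_type, Fintype.sum_prod_type,
    ← Finset.sum_add_distrib]
  apply Finset.sum_eq_zero
  intro t _
  simp only [QQ]
  have e5 : ∑ e, χ (t ^ 2 - e) = ∑ e, χ e := Equiv.sum_comp (Equiv.subLeft (t ^ 2)) (fun e => χ e)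
  rw [← Finset.sum_mul, ← Finset.sum_mul, ← add_mul,
    sq_sum h2 n hn (fun e => χ (t ^ 2 - e)), e5,
    MulChar.sum_eq_zero_of_ne_one hχ]
  simp

theorem T_eval (h2 : ringChar K ≠ 2) (n : K) (hn : ¬ IsSquare n) (χ : MulChar K ℂ) (hχ : χ ≠ 1)
    (ψ : AddChar K ℂ) (y : K × K) :
    ∑ w : K × K, χ (QQ n w) * ψ (2 * (w.1 * y.1 + n * w.2 * y.2)) =
      - gaussSum χ ψ ^ 2 * (χ (QQ n y))⁻¹ := by
  by_cases hy : y = 0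
  · subst hy
    have := W_eval h2 n hn χ hχ 1
    have h3 : gaussSum χ (1 : AddChar K ℂ) = 0 := by
      simp [gaussSum, MulChar.sum_eq_zero_of_ne_one hχ]
    rw [h3] at this
    simp at this
    simp [QQ, MulChar.map_zero] at this ⊢
    exact this
  · have hQy : QQ n y ≠ 0 := fun h => hy ((QQ_eq_zero n hn y).1 h)
    have hmul : ∀ w : K × K, QQ n (w.1 * y.1 + n * w.2 * y.2, w.1 * y.2 + w.2 * y.1) =
        QQ n w * QQ n y := by
      intro w; simp only [QQ]; ring
    have hχy : χ (QQ n y) ≠ 0 := by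
      exact (IsUnit.map χ hQy.isUnit).ne_zero
    have hinj : Function.Injective
        (fun w : K × K => (w.1 * y.1 + n * w.2 * y.2, w.1 * y.2 + w.2 * y.1)) := by
      intro w w' h
      simp only [Prod.mk.injEq] at h
      have h0 := hmul (w - w')
      have : ((w - w').1 * y.1 + n * (w - w').2 * y.2, (w - w').1 * y.2 + (w - w').2 * y.1) =
          (0 : K × K) := by
        ext
        · simp; linear_combination h.1
        · simp; linear_combination h.2
      rw [this, (QQ_eq_zero n hn 0).2 rfl] at h0
      rcases mul_eq_zero.1 h0.symm with h0 | h0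
      · exact sub_eq_zero.1 ((QQ_eq_zero n hn _).1 h0)
      · exact absurd h0 hQy
    have hb := Finite.injective_iff_bijective.1 hinj
    rw [← W_eval h2 n hn χ hχ ψ, ← hb.sum_comp (fun w => χ (QQ n w) * ψ (2 * w.1)), Finset.sum_mul]
    refine Finset.sum_congr rfl fun w _ => ?_
    simp only [hmul]
    rw [map_mul χ]
    field_simp

theorem sum_units (g : K → ℂ) : ∑ k, g k = g 0 + ∑ k ∈ Finset.univ.erase (0 : K), g k := by
  rw [Finset.add_sum_erase _ _ (Finset.mem_univ 0)]

theorem perp_sum (h2 : ringChar K ≠ 2) (n : K) (hn0 : n ≠ 0) (ψ : AddChar K ℂ) (hψ : ψ ≠ 1)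
    (f : K × K → ℂ) (hf : ∀ k : K, k ≠ 0 → ∀ x : K × K, f (k * x.1, k * x.2) = f x)
    (hsum : ∑ x, f x = Fintype.card K * f 0) (y : K × K) :
    ∑ x : K × K, f x * ψ (2 * (x.1 * y.1 + n * x.2 * y.2)) =
      Fintype.card K * f (-(n * y.2), y.1) := by
  have h20 : (2 : K) ≠ 0 := Ring.two_ne_zero h2
  by_cases hy : y = 0
  · subst hy
    rw [← Prod.mk_zero_zero] at hsum
    simpa using hsum
  set L := ∑ x : K × K, f x * ψ (2 * (x.1 * y.1 + n * x.2 * y.2)) with hL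
  have hk : ∀ k ∈ Finset.univ.erase (0 : K),
      ∑ x : K × K, f x * ψ (k * (2 * (x.1 * y.1 + n * x.2 * y.2))) = L := by
    intro k hk
    have hk0 : k ≠ 0 := Finset.ne_of_mem_erase hk
    rw [hL]
    refine Finset.sum_bij' (fun x _ => (k * x.1, k * x.2)) (fun x _ => (k⁻¹ * x.1, k⁻¹ * x.2))
      ?_ ?_ ?_ ?_ ?_
    · intros; simp
    · intros; simp
    · intro x _; ext <;> simp [hk0]
    · intro x _; ext <;> simp [hk0]
    · intro x _
      rw [hf k hk0]; congr 2; ring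
  have e1 : ∑ k : K, ∑ x : K × K, f x * ψ (k * (2 * (x.1 * y.1 + n * x.2 * y.2))) =
      Fintype.card K * f 0 + (Fintype.card K - 1) * L := by
    rw [sum_units, Finset.sum_congr rfl hk, Finset.sum_const,
      Finset.card_erase_of_mem (Finset.mem_univ _), Finset.card_univ, nsmul_eq_mul,
      Nat.cast_sub Fintype.card_pos, ← hsum]
    simp
  rw [Finset.sum_comm] at e1
  have e2 : ∀ x : K × K, ∑ k : K, f x * ψ (k * (2 * (x.1 * y.1 + n * x.2 * y.2))) =
      if x.1 * y.1 + n * x.2 * y.2 = 0 then Fintype.card K * f x else 0 := by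
    intro x
    rw [← Finset.mul_sum, AddChar.sum_mulShift _ (AddChar.IsPrimitive.of_ne_one hψ)]
    by_cases h : x.1 * y.1 + n * x.2 * y.2 = 0 <;> simp [h, h20, mul_comm]
  simp_rw [e2] at e1
  rw [← Finset.sum_filter] at e1
  have e3 : ∑ x ∈ Finset.univ.filter (fun x : K × K => x.1 * y.1 + n * x.2 * y.2 = 0),
      (Fintype.card K * f x : ℂ) = ∑ k : K, Fintype.card K * f (k * (-(n * y.2)), k * y.1) := by
    symm
    refine Finset.sum_bij (fun k _ => (k * (-(n * y.2)), k * y.1)) ?_ ?_ ?_ ?_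
    · intro k _; simp; ring
    · intro k _ k' _ h
      simp only [Prod.mk.injEq] at h
      by_contra hkk
      have hd : k - k' ≠ 0 := sub_ne_zero.2 hkk
      apply hy
      have h1 : (k - k') * y.1 = 0 := by linear_combination h.2
      have h3 : (k - k') * (n * y.2) = 0 := by linear_combination -h.1
      ext
      · simpa [hd] using h1
      · simpa [hd, hn0] using h3
    · intro x hx
      simp only [Finset.mem_filter, Finset.mem_univ, true_and] at hx
      by_cases hy1 : y.1 = 0
      · have hy2 : y.2 ≠ 0 := fun h => hy (Prod.ext hy1 h)
        have hx2 : x.2 = 0 := by simpa [hy1, hn0, hy2] using hx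
        refine ⟨-(x.1 / (n * y.2)), Finset.mem_univ _, ?_⟩
        ext
        · simp; field_simp
        · simp [hy1, hx2]
      · refine ⟨x.2 / y.1, Finset.mem_univ _, ?_⟩
        ext
        · simp; field_simp; linear_combination -hx
        · simp; field_simp
    · intros; rfl
  rw [e3, ← Finset.mul_sum, sum_units] at e1
  have e4 : ∀ k ∈ Finset.univ.erase (0 : K), f (k * (-(n * y.2)), k * y.1) = f (-(n * y.2), y.1) :=
    fun k hk => hf k (Finset.ne_of_mem_erase hk) (-(n * y.2), y.1)
  rw [Finset.sum_congr rfl e4, Finset.sum_const,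
      Finset.card_erase_of_mem (Finset.mem_univ _), Finset.card_univ, nsmul_eq_mul,
      Nat.cast_sub Fintype.card_pos] at e1
  have h1 : (Fintype.card K : ℂ) - 1 ≠ 0 := by
    rw [sub_ne_zero]; exact_mod_cast (Fintype.one_lt_card).ne'
  apply mul_left_cancel₀ h1
  have h00 : f (0 * (-(n * y.2)), 0 * y.1) = f 0 := by simp; rfl
  rw [h00] at e1
  push_cast at e1
  linear_combination -e1

end base

set_option linter.unusedSimpArgs false
set_option linter.unusedVariables false
set_option linter.unusedSectionVars false

section lemma5
variable {K : Type*} [Field K] [Fintype K]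

def lrep : Option K → K × K
  | none => (1, 0)
  | some a => (a, 1)

noncomputable def lpi (x : K × K) : Option K := if x.2 = 0 then none else some (x.1 / x.2)

theorem lpi_lrep (p : Option K) : lpi (lrep p) = p := by
  cases p <;> simp [lpi, lrep]

theorem lrep_ne (p : Option K) : lrep p ≠ (0 : K × K) := by
  cases p <;> simp [lrep, Prod.ext_iff]

theorem line_sum (g : K × K → ℂ) (hg : ∀ k : K, k ≠ 0 → ∀ x : K × K, g (k * x.1, k * x.2) = g x) :
    ∑ x, g x = g 0 + (Fintype.card K - 1) * ∑ p, g (lrep p) := by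
  rw [Fintype.sum_prod_type_right, Fintype.sum_option, sum_units (fun y => ∑ x, g (x, y))]
  have h1 : ∑ x, g (x, 0) = g 0 + (Fintype.card K - 1) * g (1, 0) := by
    rw [sum_units (fun x => g (x, 0))]
    have : ∀ k ∈ Finset.univ.erase (0 : K), g (k, 0) = g (1, 0) := by
      intro k hk
      have := hg k (Finset.ne_of_mem_erase hk) (1, 0)
      simpa using this
    rw [Finset.sum_congr rfl this, Finset.sum_const,
      Finset.card_erase_of_mem (Finset.mem_univ _), Finset.card_univ, nsmul_eq_mul,
      Nat.cast_sub Fintype.card_pos]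
    simp
    rfl
  have h2 : ∀ k ∈ Finset.univ.erase (0 : K), ∑ x, g (x, k) = ∑ a, g (a, 1) := by
    intro k hk
    have hk0 := Finset.ne_of_mem_erase hk
    have e : ∑ a, g (k * a, k) = ∑ x, g (x, k) :=
      Equiv.sum_comp (Equiv.mulLeft₀ k hk0) (fun x => g (x, k))
    rw [← e]
    refine Finset.sum_congr rfl fun a _ => ?_
    have := hg k hk0 (a, 1)
    simpa using this
  rw [Finset.sum_congr rfl h2, Finset.sum_const,
      Finset.card_erase_of_mem (Finset.mem_univ _), Finset.card_univ, nsmul_eq_mul,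
      Nat.cast_sub Fintype.card_pos, h1]
  simp only [lrep]
  push_cast
  ring

theorem geo (m N j t : ℕ) (hN : N = 1 + m * j) (ω : ℂ) (hω : IsPrimitiveRoot ω m) (ht : 0 < t)
    (htm : t < m) : ∑ i ∈ Finset.range N, (ω ^ i) ^ t = 1 := by
  have hz : ω ^ t ≠ 1 := hω.pow_ne_one_of_pos_of_lt ht.ne' htm
  have h1 := geom_sum_mul (ω ^ t) N
  have h2 : (ω ^ t) ^ N = ω ^ t := by
    rw [← pow_mul, hN, mul_add, mul_one, pow_add,
      show t * (m * j) = m * (t * j) by ring, pow_mul ω m, hω.pow_eq_one, one_pow, mul_one]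
  rw [h2] at h1
  have h3 : ∀ i, (ω ^ i) ^ t = (ω ^ t) ^ i := fun i => by rw [← pow_mul, ← pow_mul, mul_comm]
  simp_rw [h3]
  exact mul_right_cancel₀ (sub_ne_zero.2 hz) (by rw [h1, one_mul])

theorem lem5 (m N j : ℕ) (hN : N = 1 + m * j) (ω : ℂ) (hω : IsPrimitiveRoot ω m)
    (P : K × K → Prop) (hP : ∀ k : K, k ≠ 0 → ∀ x : K × K, P (k * x.1, k * x.2) ↔ P x)
    (hcount : ∑ x, (if x ≠ 0 ∧ P x then 1 else 0 : ℂ) = (Fintype.card K - 1) * N) :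
    ∃ f : K × K → ℂ, (∀ k : K, k ≠ 0 → ∀ x : K × K, f (k * x.1, k * x.2) = f x) ∧
      f 0 = 1 ∧ (∀ x, x ≠ 0 → P x → f x ^ m = 1) ∧ (∀ x, x ≠ 0 → ¬ P x → f x = 0) ∧
      ∀ t, 0 < t → t < m → ∑ x, f x ^ t = Fintype.card K := by
  have hne : ∀ k : K, k ≠ 0 → ∀ x : K × K, ((k * x.1, k * x.2) : K × K) = 0 ↔ x = 0 := by
    intro k hk x
    simp [Prod.ext_iff, hk]
  have hpi : ∀ k : K, k ≠ 0 → ∀ x : K × K, lpi (k * x.1, k * x.2) = lpi x := by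
    intro k hk x
    simp only [lpi, mul_eq_zero, hk, false_or]
    rw [mul_div_mul_left _ _ hk]
  have hc1 : (Fintype.card K : ℂ) - 1 ≠ 0 := by
    rw [sub_ne_zero]; exact_mod_cast (Fintype.one_lt_card).ne'
  set L : Finset (Option K) := Finset.univ.filter fun p => P (lrep p) with hL
  have hLc : L.card = N := by
    rw [line_sum _ (by intro k hk x; simp only [ne_eq, hne k hk x, hP k hk x])] at hcount
    simp only [lrep_ne, ne_eq, not_true_eq_false, false_and, if_false, zero_add, not_false_eq_true,
      true_and] at hcount
    have h := mul_left_cancel₀ hc1 hcount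
    rw [Finset.sum_boole] at h
    exact_mod_cast h
  let E : Option K → ℕ := fun p => if h : p ∈ L then (L.equivFin ⟨p, h⟩ : ℕ) else 0
  have hE : ∀ F : ℕ → ℂ, ∑ p ∈ L, F (E p) = ∑ i ∈ Finset.range N, F i := by
    intro F
    rw [← Finset.sum_coe_sort L (fun p => F (E p)), ← hLc, Finset.sum_range,
      ← Equiv.sum_comp L.equivFin]
    refine Finset.sum_congr rfl fun p _ => ?_
    simp only [E, p.2, dif_pos]
  refine ⟨fun x => if x = 0 then 1 else if P x then ω ^ (E (lpi x)) else 0, ?_, ?_, ?_, ?_, ?_⟩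
  · intro k hk x
    simp only [hne k hk x, hP k hk x, hpi k hk x]
  · simp
  · intro x hx hPx
    simp only [hx, hPx, if_true, if_false]
    rw [← pow_mul, mul_comm, pow_mul, hω.pow_eq_one, one_pow]
  · intro x hx hPx
    simp only [hx, hPx, if_false]
  · intro t ht htm
    rw [line_sum _ (by intro k hk x; simp only [hne k hk x, hP k hk x, hpi k hk x])]
    simp only [lrep_ne, if_true, if_false, lpi_lrep, one_pow]
    have : ∀ p, (if P (lrep p) then ω ^ (E p) else 0) ^ t =
        if P (lrep p) then (ω ^ (E p)) ^ t else 0 := by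
      intro p; split_ifs
      · rfl
      · exact zero_pow ht.ne'
    simp_rw [this]
    rw [← Finset.sum_filter, hE (fun i => (ω ^ i) ^ t), geo m N j t hN ω hω ht htm]
    ring

end lemma5

set_option linter.unusedSimpArgs false
set_option linter.unusedVariables false
set_option linter.unusedSectionVars false

noncomputable def ppr (m : ℕ) (z : ℂ) : ℂ := if z ^ m = 1 then z else 0
noncomputable def nng (m : ℕ) (z : ℂ) : ℂ := if z ^ m = -1 then z else 0

theorem ppr_pow (m t : ℕ) (ht : 0 < t) (z : ℂ) (hz : z = 0 ∨ z ^ m = 1 ∨ z ^ m = -1) :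
    ppr m z ^ t = (z ^ t + z ^ (t + m)) / 2 := by
  unfold ppr
  rcases hz with rfl | h | h
  · simp [ht.ne']
  · rw [if_pos h, pow_add, h]; ring
  · rw [if_neg (by rw [h]; norm_num), pow_add, h, zero_pow ht.ne']; ring

theorem nng_pow (m t : ℕ) (ht : 0 < t) (z : ℂ) (hz : z = 0 ∨ z ^ m = 1 ∨ z ^ m = -1) :
    nng m z ^ t = (z ^ t - z ^ (t + m)) / 2 := by
  unfold nng
  rcases hz with rfl | h | h
  · simp [ht.ne']
  · rw [if_neg (by rw [h]; norm_num), pow_add, h, zero_pow ht.ne']; ring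
  · rw [if_pos h, pow_add, h]; ring

section base
variable {K : Type*} [Field K] [Fintype K]

theorem bsum (h2 : ringChar K ≠ 2) (n : K) (hn0 : n ≠ 0) (ψ : AddChar K ℂ) (hψ : ψ ≠ 1)
    (y : K × K) (hy : y ≠ 0) :
    ∑ x : K × K, ψ (2 * (x.1 * y.1 + n * x.2 * y.2)) = 0 := by
  have h20 : (2 : K) ≠ 0 := Ring.two_ne_zero h2
  have e : ∀ x : K × K, ψ (2 * (x.1 * y.1 + n * x.2 * y.2)) =
      ψ (x.1 * (2 * y.1)) * ψ (x.2 * (2 * n * y.2)) := by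
    intro x; rw [← AddChar.map_add_eq_mul]; congr 1; ring
  simp_rw [e]
  rw [sum_prod_tensor (fun x => ψ (x * (2 * y.1))) (fun x => ψ (x * (2 * n * y.2))),
    AddChar.sum_mulShift _ (AddChar.IsPrimitive.of_ne_one hψ),
    AddChar.sum_mulShift _ (AddChar.IsPrimitive.of_ne_one hψ)]
  by_cases hy1 : y.1 = 0
  · have hy2 : y.2 ≠ 0 := fun h => hy (Prod.ext hy1 h)
    simp [h20, hn0, hy2]
  · simp [h20, hy1]

theorem base_blk (m q : ℕ) (hm : 0 < m) (hdvd : 2 * m ∣ q + 1) (hK : Fintype.card K = q ^ 2) :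
    Nonempty (Blk m (q ^ 2) (K × K)) := by
  have hq2 : 2 ≤ q := by
    have := Fintype.one_lt_card (α := K)
    rw [hK] at this
    by_contra h
    interval_cases q <;> simp at this
  obtain ⟨k, hk⟩ := hdvd
  have hchar : ringChar K ≠ 2 := by
    intro h
    have h1 := (FiniteField.even_card_iff_char_two (F := K)).1 h
    rw [hK] at h1
    have h3 : Even (q ^ 2) := Nat.even_iff.2 h1
    have h4 : Even q := (Nat.even_pow.1 h3).1
    have h5 : Even (q + 1) := ⟨m * k, by rw [hk]; ring⟩
    rw [Nat.even_add_one] at h5; exact h5 h4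
  obtain ⟨ψ, hψ, hgauss⟩ := exists_psi (K := K) q hq2 hK
  obtain ⟨χ, hχ⟩ := MulChar.exists_mulChar_orderOf K (n := 2 * m) (R := ℂ)
    (by
      rw [hK]
      have : q ^ 2 - 1 = (q + 1) * (q - 1) := by simpa using Nat.sq_sub_sq q 1
      rw [this, hk, mul_assoc]; exact Dvd.intro _ rfl)
    (Complex.isPrimitiveRoot_exp (2 * m) (by omega))
  have hχj : ∀ j, 0 < j → j < 2 * m → χ ^ j ≠ 1 := by
    intro j h1 h2
    exact pow_ne_one_of_lt_orderOf h1.ne' (by rw [hχ]; exact h2)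
  have hχ2m : χ ^ (2 * m) = 1 := by rw [← hχ]; exact pow_orderOf_eq_one χ
  have hχq : χ ^ (q + 1) = 1 := by rw [hk, pow_mul, hχ2m, one_pow]
  have hx2m : ∀ x : K, x ≠ 0 → χ x ^ (2 * m) = 1 := by
    intro x hx
    rw [← MulChar.pow_apply' χ (by omega), hχ2m, MulChar.one_apply hx.isUnit]
  have hpm : ∀ x : K, x ≠ 0 → χ x ^ m = 1 ∨ χ x ^ m = -1 := by
    intro x hx
    have := sq_eq_sq_iff_eq_or_eq_neg (a := χ x ^ m) (b := 1)
    rw [one_pow] at this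
    apply this.1
    rw [← pow_mul, mul_comm, hx2m x hx]
  obtain ⟨n, hn0, hnm⟩ : ∃ n : K, n ≠ 0 ∧ χ n ^ m = -1 := by
    obtain ⟨a, ha⟩ := MulChar.ne_one_iff.1 (hχj m hm (by omega))
    rw [MulChar.pow_apply' χ hm.ne'] at ha
    exact ⟨a, a.ne_zero, (hpm a a.ne_zero).resolve_left ha⟩
  have hn : ¬ IsSquare n := by
    rintro ⟨r, rfl⟩
    have hr : r ≠ 0 := left_ne_zero_of_mul hn0
    rw [map_mul, ← sq, ← pow_mul, hx2m r hr] at hnm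
    norm_num at hnm
  have hneg1 : χ (-1) ^ m = 1 := by
    have : IsSquare (-1 : K) := by
      rw [FiniteField.isSquare_neg_one_iff, hK]
      have hodd : q % 2 = 1 := by
        have : q + 1 = 2 * (m * k) := by rw [hk]; ring
        omega
      rcases (by omega : q % 4 = 1 ∨ q % 4 = 3) with h | h <;> simp [Nat.pow_mod, h]
    obtain ⟨r, hr⟩ := this
    have hr0 : r ≠ 0 := by rintro rfl; simp at hr
    rw [hr, map_mul, ← sq, ← pow_mul, hx2m r hr0]
  set V : K × K → ℂ := fun x => χ (QQ n x) with hV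
  have hV0 : V 0 = 0 := by
    simp only [hV, (QQ_eq_zero n hn 0).2 rfl]; exact MulChar.map_zero χ
  have hQ : ∀ x, x ≠ 0 → QQ n x ≠ 0 := fun x hx h => hx ((QQ_eq_zero n hn x).1 h)
  have hVpm : ∀ x, x ≠ 0 → V x ^ m = 1 ∨ V x ^ m = -1 := fun x hx => hpm _ (hQ x hx)
  have hVk : ∀ k : K, k ≠ 0 → ∀ x : K × K, V (k * x.1, k * x.2) ^ m = V x ^ m := by
    intro k hk x
    have : QQ n (k * x.1, k * x.2) = k * k * QQ n x := by simp only [QQ]; ring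
    simp only [hV, this, map_mul]
    rw [mul_pow, ← sq, ← pow_mul, hx2m k hk, one_mul]
  have hVneg : ∀ x, V (-x) = V x := by
    intro x; simp [hV, QQ]
  have hVperp : ∀ x : K × K, V (-(n * x.2), x.1) ^ m = - V x ^ m := by
    intro x
    have : QQ n (-(n * x.2), x.1) = (-1) * n * QQ n x := by simp only [QQ]; ring
    simp only [hV, this, map_mul]
    rw [mul_pow, mul_pow, hneg1, hnm]; ring
  have hperp0 : ∀ x : K × K, x ≠ 0 → ((-(n * x.2), x.1) : K × K) ≠ 0 := by
    intro x hx h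
    simp [Prod.ext_iff, hn0] at h
    exact hx (Prod.ext h.2 h.1)
  have hTT : ∀ j, 0 < j → j < 2 * m → ∀ y : K × K,
      ∑ x : K × K, V x ^ j * ψ (2 * (x.1 * y.1 + n * x.2 * y.2)) = -(q ^ 2) * (V y)⁻¹ ^ j := by
    intro j h1 h2 y
    have := T_eval hchar n hn (χ ^ j) (hχj j h1 h2) ψ y
    rw [hgauss (χ ^ j) (hχj j h1 h2) (by rw [← pow_mul, mul_comm, pow_mul, hχq, one_pow])] at this
    simp only [MulChar.pow_apply' χ h1.ne'] at this
    rw [inv_pow]; exact this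
  have hcases : ∀ x, V x = 0 ∨ V x ^ m = 1 ∨ V x ^ m = -1 := by
    intro x
    by_cases hx : x = 0
    · left; rw [hx, hV0]
    · right; exact hVpm x hx
  have hcases' : ∀ x, (V x)⁻¹ = 0 ∨ (V x)⁻¹ ^ m = 1 ∨ (V x)⁻¹ ^ m = -1 := by
    intro x
    rcases hcases x with h | h | h
    · left; rw [h, inv_zero]
    · right; left; rw [inv_pow, h, inv_one]
    · right; right; rw [inv_pow, h]; norm_num
  have hν0 : χ n ≠ 0 := by
    intro h; rw [h, zero_pow hm.ne'] at hnm; norm_num at hnm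
  set ν := (χ n)⁻¹ with hν
  have hνm : ν ^ m = -1 := by rw [hν, inv_pow, hnm]; norm_num
  -- counts
  have hS0 : ∑ x, V x ^ m = 0 := by
    have := hTT m hm (by omega) 0
    simpa [hV0, hm.ne'] using this
  have hcardKK : ∑ x : K × K, (if x ≠ 0 then (1 : ℂ) else 0) = (q ^ 2) ^ 2 - 1 := by
    rw [Finset.sum_boole, Finset.filter_ne', Finset.card_erase_of_mem (Finset.mem_univ _),
      Finset.card_univ, Fintype.card_prod, hK, Nat.cast_sub]
    · push_cast; ring
    · have : 0 < q ^ 2 * q ^ 2 := by positivity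
      omega
  obtain ⟨N, j, hN, hNq⟩ : ∃ N j : ℕ, N = 1 + m * j ∧ 2 * N = q ^ 2 + 1 := by
    have hk0 : 0 < k := by
      rcases Nat.eq_zero_or_pos k with h | h
      · rw [h] at hk; omega
      · exact h
    obtain ⟨r, hr⟩ : ∃ r, m * k = r + 1 := ⟨m * k - 1, by have := Nat.mul_pos hm hk0; omega⟩
    refine ⟨_, 2 * k * r, rfl, ?_⟩
    have hq' : q = 2 * r + 1 := by
      have : q + 1 = 2 * (m * k) := by rw [hk]; ring
      omega
    have h3 : m * (2 * k * r) = 2 * (r + 1) * r := by rw [← hr]; ring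
    rw [h3, hq']; ring
  have hNc : (2 : ℂ) * N = q ^ 2 + 1 := by exact_mod_cast hNq
  obtain ⟨ω, hω⟩ : ∃ ω : ℂ, IsPrimitiveRoot ω m := ⟨_, Complex.isPrimitiveRoot_exp m hm.ne'⟩
  obtain ⟨c, hck, hc0, hc1, hc2, hcs⟩ := lem5 m N j hN ω hω (fun x => V x ^ m = 1)
    (fun k hk x => by rw [hVk k hk x]) (by
      have : ∀ x : K × K, (if x ≠ 0 ∧ V x ^ m = 1 then (1 : ℂ) else 0) =
          ((if x ≠ 0 then (1 : ℂ) else 0) + V x ^ m) / 2 := by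
        intro x
        by_cases hx : x = 0
        · simp [hx, hV0, hm.ne']
        · rcases hVpm x hx with h | h <;> norm_num [hx, h]
      simp_rw [this]
      rw [← Finset.sum_div, Finset.sum_add_distrib, hS0, hcardKK, hK]
      push_cast
      linear_combination -((q : ℂ) ^ 2 - 1) / 2 * hNc)
  obtain ⟨d, hdk, hd0, hd1, hd2, hds⟩ := lem5 m N j hN ω hω (fun x => V x ^ m = -1)
    (fun k hk x => by rw [hVk k hk x]) (by
      have : ∀ x : K × K, (if x ≠ 0 ∧ V x ^ m = -1 then (1 : ℂ) else 0) =
          ((if x ≠ 0 then (1 : ℂ) else 0) - V x ^ m) / 2 := by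
        intro x
        by_cases hx : x = 0
        · simp [hx, hV0, hm.ne']
        · rcases hVpm x hx with h | h <;> norm_num [hx, h]
      simp_rw [this]
      rw [← Finset.sum_div, Finset.sum_sub_distrib, hS0, hcardKK, hK]
      push_cast
      linear_combination -((q : ℂ) ^ 2 - 1) / 2 * hNc)
  have hkneg : ∀ f : K × K → ℂ,
      (∀ k : K, k ≠ 0 → ∀ x : K × K, f (k * x.1, k * x.2) = f x) → ∀ x, f (-x) = f x := by
    intro f hf x
    rw [← hf (-1) (by simp) x]
    congr 1; ext <;> simp
  have hps : ∀ f : K × K → ℂ, (∀ k : K, k ≠ 0 → ∀ x : K × K, f (k * x.1, k * x.2) = f x) →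
      f 0 = 1 → (∀ t, 0 < t → t < m → ∑ x, f x ^ t = Fintype.card K) →
      ∀ t, 0 < t → t < m → ∀ y : K × K,
      ∑ x : K × K, f x ^ t * ψ (2 * (x.1 * y.1 + n * x.2 * y.2)) =
        ((q ^ 2 : ℕ) : ℂ) * f (-(n * y.2), y.1) ^ t := by
    intro f hf h0 hs t ht htm y
    have := perp_sum hchar n hn0 ψ hψ (fun x => f x ^ t)
      (fun k hk x => by simp only [hf k hk x]) (by simp only [hs t ht htm, h0]; simp) y
    rw [hK] at this
    exact this
  have h11 : (1 : ℂ) ≠ -1 := by norm_num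
  exact ⟨{
    B := fun x y => ψ (2 * (x.1 * y.1 + n * x.2 * y.2))
    B_add := by
      intro x x' y
      rw [← AddChar.map_add_eq_mul]; congr 1; simp only [Prod.fst_add, Prod.snd_add]; ring
    B_zl := by intro y; simp
    B_zr := by intro y; simp
    sum_l := fun y hy => bsum hchar n hn0 ψ hψ y hy
    sum_r := by
      intro x hx
      rw [← bsum hchar n hn0 ψ hψ x hx]
      refine Finset.sum_congr rfl fun y _ => ?_
      congr 1; ring
    card_eq := by rw [Fintype.card_prod, hK]; ring
    a := fun x => ppr m (V x)
    b := fun x => nng m (V x) * ν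
    c := c
    d := d
    a' := fun x => ppr m (V x)⁻¹
    b' := fun x => nng m (V x)⁻¹ * ν
    c' := fun y => c (-(n * y.2), y.1)
    d' := fun y => d (-(n * y.2), y.1)
    prim := by
      intro x
      by_cases hx : x = 0
      · left
        subst hx
        simp [ppr, nng, hV0, hc0, hd0]
      · right
        rcases hVpm x hx with h | h
        · left
          refine ⟨hx, ?_, ?_, hc1 x hx h, hd2 x hx (by rw [h]; exact h11)⟩
          · simp only [ppr, h, if_true]
          · simp only [nng, h, h11, if_false, zero_mul]
        · right
          refine ⟨hx, ?_, ?_, hc2 x hx (by rw [h]; exact h11.symm), hd1 x hx h⟩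
          · simp only [ppr, h, h11.symm, if_false]
          · simp only [nng, h, if_true]
            rw [mul_pow, h, hνm]; norm_num
    dual := by
      intro x
      by_cases hx : x = 0
      · left
        subst hx
        have : ((-(n * (0 : K × K).2), (0 : K × K).1) : K × K) = 0 := by simp
        simp only [this]
        simp [ppr, nng, hV0, hc0, hd0]
      · right
        have hp0 := hperp0 x hx
        have hpV := hVperp x
        rcases hVpm x hx with h | h
        · left
          have hi : (V x)⁻¹ ^ m = 1 := by rw [inv_pow, h, inv_one]
          rw [h] at hpV
          refine ⟨hx, ?_, ?_, hc2 _ hp0 (by rw [hpV]; exact h11.symm), hd1 _ hp0 hpV⟩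
          · simp only [ppr, hi, if_true]
          · simp only [nng, hi, h11, if_false, zero_mul]
        · right
          have hi : (V x)⁻¹ ^ m = -1 := by rw [inv_pow, h]; norm_num
          rw [h, neg_neg] at hpV
          refine ⟨hx, ?_, ?_, hc1 _ hp0 hpV, hd2 _ hp0 (by rw [hpV]; exact h11)⟩
          · simp only [ppr, hi, h11.symm, if_false]
          · simp only [nng, hi, if_true]
            rw [mul_pow, hi, hνm]; norm_num
    neg_a := by intro x; simp only [hVneg]
    neg_b := by intro x; simp only [hVneg]
    neg_c := hkneg c hck
    neg_d := hkneg d hdk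
    Ta := by
      intro t ht htm y
      rw [ppr_pow m t ht _ (hcases' y)]
      have e : ∀ x : K × K, ppr m (V x) ^ t * ψ (2 * (x.1 * y.1 + n * x.2 * y.2)) =
          (V x ^ t * ψ (2 * (x.1 * y.1 + n * x.2 * y.2)) +
          V x ^ (t + m) * ψ (2 * (x.1 * y.1 + n * x.2 * y.2))) / 2 := by
        intro x; rw [ppr_pow m t ht _ (hcases x)]; ring
      simp_rw [e]
      rw [← Finset.sum_div, Finset.sum_add_distrib, hTT t ht (by omega),
        hTT (t + m) (by omega) (by omega)]
      push_cast; ring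
    Tb := by
      intro t ht htm y
      rw [mul_pow, nng_pow m t ht _ (hcases' y)]
      have e : ∀ x : K × K, (nng m (V x) * ν) ^ t * ψ (2 * (x.1 * y.1 + n * x.2 * y.2)) =
          (V x ^ t * ψ (2 * (x.1 * y.1 + n * x.2 * y.2)) -
          V x ^ (t + m) * ψ (2 * (x.1 * y.1 + n * x.2 * y.2))) * (ν ^ t / 2) := by
        intro x; rw [mul_pow, nng_pow m t ht _ (hcases x)]; ring
      simp_rw [e]
      rw [← Finset.sum_mul, Finset.sum_sub_distrib, hTT t ht (by omega),
        hTT (t + m) (by omega) (by omega)]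
      push_cast; ring
    Tc := hps c hck hc0 hcs
    Td := hps d hdk hd0 hds }⟩

end base

theorem blk_field (m q : ℕ) (hm : 0 < m) (hq : IsPrimePow q) (hdvd : 2 * m ∣ q + 1)
    (F : Type*) [Field F] [Fintype F] (hF : Fintype.card F = q ^ 4) :
    Nonempty (Blk m (q ^ 2) F) := by
  obtain ⟨p, k, hp, hk, rfl⟩ := (isPrimePow_nat_iff q).1 hq
  have : Fact p.Prime := ⟨hp⟩
  have hch : CharP F p := by
    obtain ⟨p', hp'⟩ := CharP.exists F
    obtain ⟨n, hpp, hn⟩ := FiniteField.card F p'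
    have : p' = p := by
      rw [hF] at hn
      have h : p' ∣ (p ^ k) ^ 4 := by rw [hn]; exact dvd_pow_self p' n.ne_zero
      exact (Nat.prime_dvd_prime_iff_eq hpp hp).1 (hpp.dvd_of_dvd_pow (hpp.dvd_of_dvd_pow h))
    rw [← this]; exact hp'
  letI : Algebra (ZMod p) F := ZMod.algebra F p
  letI : Fintype (GaloisField p (2 * k)) := Fintype.ofFinite _
  have hKc : Fintype.card (GaloisField p (2 * k)) = (p ^ k) ^ 2 := by
    rw [← Nat.card_eq_fintype_card, GaloisField.card p (2 * k) (by omega)]; ring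
  have hfr : Module.finrank (ZMod p) F =
      Module.finrank (ZMod p) (GaloisField p (2 * k) × GaloisField p (2 * k)) := by
    apply Nat.pow_right_injective hp.two_le
    have h1 := Module.card_eq_pow_finrank (K := ZMod p) (V := F)
    have h2 := Module.card_eq_pow_finrank (K := ZMod p)
      (V := GaloisField p (2 * k) × GaloisField p (2 * k))
    rw [ZMod.card] at h1 h2
    simp only
    rw [← h1, ← h2, hF, Fintype.card_prod, hKc]; ring
  obtain ⟨X⟩ := base_blk (K := GaloisField p (2 * k)) m (p ^ k) hm hdvd hKc
  exact ⟨X.equiv (LinearEquiv.ofFinrankEq F _ hfr).toAddEquiv⟩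

set_option linter.unusedSimpArgs false
set_option linter.unusedVariables false

theorem Blk.inv {m u : ℕ} {G : Type*} [AddCommGroup G] [Fintype G] (X : Blk m u G)
    (F : G → ℂ) (z : G) : ∑ y, X.B (-z) y * ∑ x, F x * X.B x y = u ^ 2 * F z := by
  simp_rw [Finset.mul_sum]
  rw [Finset.sum_comm]
  have : ∀ x, ∑ y, X.B (-z) y * (F x * X.B x y) = if x = z then (u : ℂ) ^ 2 * F z else 0 := by
    intro x
    have h : ∀ y, X.B (-z) y * (F x * X.B x y) = F x * X.B (-z + x) y := by
      intro y; rw [X.B_add]; ring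
    simp_rw [h]
    rw [← Finset.mul_sum]
    split_ifs with hx
    · subst hx
      simp [X.B_zl, X.card_eq, mul_comm]
    · rw [X.sum_r, mul_zero]
      intro h; apply hx; rw [neg_add_eq_zero] at h; exact h.symm
  simp_rw [this]
  simp

theorem Blk.inj {m u : ℕ} (hu : 0 < u) {G : Type*} [AddCommGroup G] [Fintype G] (X : Blk m u G)
    (F F' : G → ℂ) (h : ∀ y, ∑ x, F x * X.B x y = ∑ x, F' x * X.B x y) : F = F' := by
  funext z
  have h1 := X.inv F z
  simp_rw [h] at h1
  rw [X.inv] at h1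
  have : (u : ℂ) ^ 2 ≠ 0 := pow_ne_zero _ (by exact_mod_cast hu.ne')
  exact (mul_left_cancel₀ this h1).symm

theorem Blk.conv {m u : ℕ} {G : Type*} [AddCommGroup G] [Fintype G] (X : Blk m u G)
    (f : G → ℂ) (y : G) : ∑ z, (∑ x, f x * f (z - x)) * X.B z y = (∑ x, f x * X.B x y) ^ 2 := by
  simp_rw [Finset.sum_mul]
  rw [Finset.sum_comm, sq, Finset.sum_mul]
  refine Finset.sum_congr rfl fun x _ => ?_
  rw [Finset.mul_sum, ← Equiv.sum_comp (Equiv.addLeft x)]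
  refine Finset.sum_congr rfl fun w _ => ?_
  simp [X.B_add]; ring

theorem Blk.sum_delta {m u : ℕ} {G : Type*} [AddCommGroup G] [Fintype G] (X : Blk m u G)
    (y : G) : ∑ x, X.B x y = if y = 0 then (u : ℂ) ^ 2 else 0 := by
  split_ifs with h
  · subst h; simp [X.B_zr, X.card_eq]
  · exact X.sum_l y h

theorem Blk.count {m u : ℕ} (hu : 1 < u) {G : Type*} [AddCommGroup G] [Fintype G]
    (X : Blk m u G) (D : Finset G) (h0 : (0 : G) ∉ D)
    (c : ℂ) (e : G → ℂ) (he : ∀ y, e y = 0 ∨ e y = 1)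
    (hT : ∀ y, ∑ x, (if x ∈ D then (1 : ℂ) else 0) * X.B x y =
      if y = 0 then c * (u + 1) else c - u * e y) (z : G) :
    ((Finset.univ.filter fun x => x ∈ D ∧ z - x ∈ D).card : ℂ) =
      if z = 0 then c * (u + 1) else if z ∈ D then -u + c ^ 2 + 3 * c else c ^ 2 + c := by
  have key : (fun z => ∑ x, (if x ∈ D then (1 : ℂ) else 0) * (if z - x ∈ D then (1 : ℂ) else 0)) =
      fun z => (c * (u + 1) - (c ^ 2 + c)) * (if z = 0 then 1 else 0) +
        (-u + 2 * c) * (if z ∈ D then (1 : ℂ) else 0) + (c ^ 2 + c) := by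
    apply X.inj (by omega)
    intro y
    rw [X.conv (fun x => if x ∈ D then (1 : ℂ) else 0), hT y]
    obtain ⟨k1, hk1⟩ : ∃ k1, k1 = c * (u + 1) - (c ^ 2 + c) := ⟨_, rfl⟩
    obtain ⟨k2, hk2⟩ : ∃ k2, k2 = -u + 2 * c := ⟨_, rfl⟩
    obtain ⟨k3, hk3⟩ : ∃ k3, k3 = c ^ 2 + c := ⟨_, rfl⟩
    rw [← hk1, ← hk2, ← hk3]
    simp_rw [add_mul, mul_assoc]
    rw [Finset.sum_add_distrib, Finset.sum_add_distrib, ← Finset.mul_sum, ← Finset.mul_sum,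
      ← Finset.mul_sum, hT y, X.sum_delta]
    have : ∑ x, (if x = 0 then (1 : ℂ) else 0) * X.B x y = 1 := by simp [X.B_zl]
    rw [this, hk1, hk2, hk3]
    split_ifs with h
    · ring
    · rcases he y with h | h <;> rw [h] <;> ring
  have k2 := congrFun key z
  have : ((Finset.univ.filter fun x => x ∈ D ∧ z - x ∈ D).card : ℂ) =
    ∑ x, (if x ∈ D then (1 : ℂ) else 0) * (if z - x ∈ D then (1 : ℂ) else 0) := by
    rw [Finset.card_filter]; push_cast
    refine Finset.sum_congr rfl fun x _ => ?_
    by_cases h1 : x ∈ D <;> by_cases h2 : z - x ∈ D <;> simp [h1, h2]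
  rw [this, k2]
  split_ifs with h1 h2 h2
  · subst h1; exact absurd h2 h0
  · ring
  · ring
  · ring

theorem Blk.srg {m u : ℕ} (hu : 1 < u) {G : Type*} [AddCommGroup G] [Fintype G]
    (X : Blk m u G) (D : Finset G) (h0 : (0 : G) ∉ D) (hneg : ∀ g ∈ D, -g ∈ D)
    (c : ℤ) (hc : 0 < c) (e : G → ℂ) (he : ∀ y, e y = 0 ∨ e y = 1)
    (hT : ∀ y, ∑ x, (if x ∈ D then (1 : ℂ) else 0) * X.B x y =
      if y = 0 then (c : ℂ) * (u + 1) else c - u * e y) :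
    ∃ k l μ : ℕ, (SimpleGraph.fromRel fun a b : G => a - b ∈ D).IsSRGWith (u ^ 2) k l μ ∧
          (k : ℤ) = c * ((u : ℤ) + 1) ∧
          (l : ℤ) = -(u : ℤ) + c ^ 2 + 3 * c ∧
          (μ : ℤ) = c ^ 2 + c := by
  have cnt := X.count hu D h0 c e he hT
  have hneg' : ∀ g, -g ∈ D ↔ g ∈ D := fun g =>
    ⟨fun h => by simpa using hneg _ h, hneg g⟩
  have cnt0 : (D.card : ℤ) = c * (u + 1) := by
    have := cnt 0
    simp [hneg'] at this
    exact_mod_cast this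
  have cnt1 : ∀ z ∈ D, ((Finset.univ.filter fun x => x ∈ D ∧ z - x ∈ D).card : ℤ) =
      -u + c ^ 2 + 3 * c := by
    intro z hz
    have := cnt z
    rw [if_neg (by rintro rfl; exact h0 hz), if_pos hz] at this
    exact_mod_cast this
  have cnt2 : ∀ z, z ≠ 0 → z ∉ D → ((Finset.univ.filter fun x => x ∈ D ∧ z - x ∈ D).card : ℤ) =
      c ^ 2 + c := by
    intro z hz hz'
    have := cnt z
    rw [if_neg hz, if_neg hz'] at this
    exact_mod_cast this
  have hne : D.Nonempty := by
    rw [← Finset.card_pos]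
    have : (0 : ℤ) < D.card := by rw [cnt0]; positivity
    exact_mod_cast this
  obtain ⟨z0, hz0⟩ := hne
  have adj : ∀ v w, (SimpleGraph.fromRel fun a b : G => a - b ∈ D).Adj v w ↔ v - w ∈ D := by
    intro v w
    rw [SimpleGraph.fromRel_adj]
    constructor
    · rintro ⟨_, h | h⟩
      · exact h
      · rw [← neg_sub]; exact hneg _ h
    · intro h
      refine ⟨?_, Or.inl h⟩
      rintro rfl
      rw [sub_self] at h; exact h0 h
  have cn : ∀ v w, Fintype.card ((SimpleGraph.fromRel fun a b : G => a - b ∈ D).commonNeighbors v w)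
      = (Finset.univ.filter fun x => x ∈ D ∧ (v - w) - x ∈ D).card := by
    intro v w
    rw [← Set.toFinset_card]
    refine Finset.card_bij' (fun x _ => v - x) (fun x _ => v - x) ?_ ?_ ?_ ?_
    · intro x hx
      simp only [Set.mem_toFinset, SimpleGraph.mem_commonNeighbors, adj] at hx
      simp only [Finset.mem_filter, Finset.mem_univ, true_and]
      refine ⟨hx.1, ?_⟩
      rw [← hneg']
      convert hx.2 using 1; abel
    · intro x hx
      simp only [Set.mem_toFinset, SimpleGraph.mem_commonNeighbors, adj]
      simp only [Finset.mem_filter, Finset.mem_univ, true_and] at hx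
      refine ⟨by simpa using hx.1, ?_⟩
      rw [← hneg']
      convert hx.2 using 1; abel
    · intros; simp
    · intros; simp
  refine ⟨D.card, (Finset.univ.filter fun x => x ∈ D ∧ z0 - x ∈ D).card, (c ^ 2 + c).toNat,
    ⟨X.card_eq, ?_, ?_, ?_⟩, cnt0, cnt1 _ hz0, Int.toNat_of_nonneg (by positivity)⟩
  · intro v
    rw [← SimpleGraph.card_neighborFinset_eq_degree]
    refine Finset.card_bij' (fun x _ => v - x) (fun x _ => v - x) ?_ ?_ ?_ ?_
    · intro x hx
      rw [SimpleGraph.mem_neighborFinset, adj] at hx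
      exact hx
    · intro x hx
      rw [SimpleGraph.mem_neighborFinset, adj]
      simpa using hx
    · intros; simp
    · intros; simp
  · intro v w h
    rw [adj] at h
    rw [cn]
    have h1 := cnt1 _ h
    rw [← cnt1 _ hz0] at h1
    exact_mod_cast h1
  · intro v w hvw h
    rw [adj] at h
    rw [cn]
    have h1 := cnt2 _ (sub_ne_zero.2 hvw) h
    omega

theorem root_ind {m : ℕ} (hm : 0 < m) (ω : ℂ) (hω : IsPrimitiveRoot ω m) (z : ℂ) (hz : z ^ m = 1)
    (j : ℕ) : ∑ t ∈ (Finset.range m).erase 0, (ω ^ j)⁻¹ ^ t * z ^ t =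
      -1 + if z = ω ^ j then (m : ℂ) else 0 := by
  have hω0 : ω ≠ 0 := hω.ne_zero hm.ne'
  have h0 : (0 : ℕ) ∈ Finset.range m := by simpa using hm
  have := Finset.add_sum_erase (Finset.range m) (fun t => (ω ^ j)⁻¹ ^ t * z ^ t) h0
  rw [eq_neg_add_iff_add_eq]
  simp only [pow_zero, mul_one] at this
  rw [this]
  simp_rw [← mul_pow]
  split_ifs with h
  · rw [h, inv_mul_cancel₀ (pow_ne_zero _ hω0)]; simp
  · have h1 : (ω ^ j)⁻¹ * z ≠ 1 := by
      intro h1; apply h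
      field_simp at h1; exact h1
    rw [geom_sum_eq h1, mul_pow, hz, inv_pow, ← pow_mul, mul_comm j, pow_mul, hω.pow_eq_one]
    simp

theorem Blk.final {m u : ℕ} (hm : 0 < m) (hu : 1 < u) {G : Type*} [AddCommGroup G] [Fintype G]
    (X : Blk m u G) :
    ∃ D : Fin m → Finset G,
      (∀ j, (0 : G) ∉ D j) ∧
      (∀ j, ∀ g ∈ D j, -g ∈ D j) ∧
      (∀ j j', j ≠ j' → Disjoint (D j) (D j')) ∧
      (Finset.univ.biUnion D = Finset.univ \ {0}) ∧
      (∀ I : Finset (Fin m), I.Nonempty → ∀ c : ℤ, (m : ℤ) * c = I.card * ((u : ℤ) - 1) →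
        ∃ k l μ : ℕ,
          (SimpleGraph.fromRel fun a b : G => a - b ∈ I.biUnion D).IsSRGWith
            (u ^ 2) k l μ ∧
          (k : ℤ) = c * ((u : ℤ) + 1) ∧
          (l : ℤ) = -(u : ℤ) + c ^ 2 + 3 * c ∧
          (μ : ℤ) = c ^ 2 + c) := by
  obtain ⟨ω, hω⟩ : ∃ ω : ℂ, IsPrimitiveRoot ω m := ⟨_, Complex.isPrimitiveRoot_exp m hm.ne'⟩
  have hω0 : ω ≠ 0 := hω.ne_zero hm.ne'
  set h : G → ℂ := fun x => X.a x + X.b x with hh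
  set h' : G → ℂ := fun x => X.a' x + X.b' x with hh'
  have hz : h 0 = 0 := by
    rcases X.prim 0 with h | h | h
    · simp [hh, h]
    · exact absurd rfl h.1
    · exact absurd rfl h.1
  have hz' : h' 0 = 0 := by
    rcases X.dual 0 with h | h | h
    · simp [hh', h]
    · exact absurd rfl h.1
    · exact absurd rfl h.1
  have hr : ∀ x, x ≠ 0 → h x ^ m = 1 := by
    intro x hx
    rcases X.prim x with h | h | h
    · exact absurd h.1 hx
    · simp [hh, h]
    · simp [hh, h]
  have hr' : ∀ x, x ≠ 0 → h' x ^ m = 1 := by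
    intro x hx
    rcases X.dual x with h | h | h
    · exact absurd h.1 hx
    · simp [hh', h]
    · simp [hh', h]
  have hab : ∀ x, X.a x * X.b x = 0 := by
    intro x
    rcases X.prim x with ⟨-, h⟩ | ⟨-, h⟩ | ⟨-, h⟩ <;> simp [h]
  have hab' : ∀ x, X.a' x * X.b' x = 0 := by
    intro x
    rcases X.dual x with ⟨-, h⟩ | ⟨-, h⟩ | ⟨-, h⟩ <;> simp [h]
  have hT : ∀ t, 0 < t → t < m → ∀ y, ∑ x, h x ^ t * X.B x y = -u * h' y ^ t := by
    intro t h0 h1 y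
    simp only [hh, hh']
    rw [add_pow_disj _ _ t h0 (hab' y), mul_add, ← X.Ta t h0 h1, ← X.Tb t h0 h1,
      ← Finset.sum_add_distrib]
    refine Finset.sum_congr rfl fun x _ => ?_
    rw [add_pow_disj _ _ t h0 (hab x)]; ring
  have hinj : ∀ j j' : Fin m, ω ^ (j : ℕ) = ω ^ (j' : ℕ) → j = j' := by
    intro j j' e
    exact Fin.ext (hω.pow_inj j.2 j'.2 e)
  have hmC : (m : ℂ) ≠ 0 := by exact_mod_cast hm.ne'
  -- transform of a single class
  have hTj : ∀ (j : Fin m) y, (m : ℂ) * ∑ x, (if h x = ω ^ (j : ℕ) then (1 : ℂ) else 0) * X.B x y =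
      if y = 0 then (u : ℂ) ^ 2 - 1 else -1 + (u : ℂ) - u * m * (if h' y = ω ^ (j : ℕ) then 1 else 0) := by
    intro j y
    have e1 : ∀ x, (m : ℂ) * ((if h x = ω ^ (j : ℕ) then (1 : ℂ) else 0) * X.B x y) =
        X.B x y - (if x = 0 then 1 else 0) * X.B x y +
        ∑ t ∈ (Finset.range m).erase 0, (ω ^ (j : ℕ))⁻¹ ^ t * (h x ^ t * X.B x y) := by
      intro x
      by_cases hx : x = 0
      · subst hx
        rw [hz, if_neg (pow_ne_zero _ hω0).symm, Finset.sum_eq_zero]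
        · simp
        · intro t ht
          rw [zero_pow (Finset.ne_of_mem_erase ht)]; ring
      · simp_rw [← mul_assoc]
        rw [← Finset.sum_mul, root_ind hm ω hω _ (hr x hx), if_neg hx]
        split_ifs <;> ring
    rw [Finset.mul_sum]
    simp_rw [e1]
    rw [Finset.sum_add_distrib, Finset.sum_sub_distrib, Finset.sum_comm, X.sum_delta]
    have : ∑ x, (if x = 0 then (1 : ℂ) else 0) * X.B x y = 1 := by simp [X.B_zl]
    rw [this]
    have e2 : ∀ t ∈ (Finset.range m).erase 0, ∑ x, (ω ^ (j : ℕ))⁻¹ ^ t * (h x ^ t * X.B x y) =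
        -u * ((ω ^ (j : ℕ))⁻¹ ^ t * h' y ^ t) := by
      intro t ht
      rw [← Finset.mul_sum, hT t (Nat.pos_of_ne_zero (Finset.ne_of_mem_erase ht))
        (Finset.mem_range.1 (Finset.mem_of_mem_erase ht))]
      ring
    rw [Finset.sum_congr rfl e2, ← Finset.mul_sum]
    by_cases hy : y = 0
    · subst hy
      rw [hz', Finset.sum_eq_zero]
      · simp
      · intro t ht
        rw [zero_pow (Finset.ne_of_mem_erase ht)]; ring
    · rw [root_ind hm ω hω _ (hr' y hy), if_neg hy, if_neg hy]
      split_ifs <;> ring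
  refine ⟨fun j => Finset.univ.filter fun x => h x = ω ^ (j : ℕ), ?_, ?_, ?_, ?_, ?_⟩
  · intro j
    simp only [Finset.mem_filter, Finset.mem_univ, true_and, hz]
    exact (pow_ne_zero _ hω0).symm
  · intro j g hg
    simpa [hh, X.neg_a, X.neg_b] using hg
  · intro j j' hj
    rw [Finset.disjoint_left]
    intro x hx hx'
    simp only [Finset.mem_filter, Finset.mem_univ, true_and] at hx hx'
    exact hj (hinj _ _ (hx.symm.trans hx'))
  · ext x
    simp only [Finset.mem_biUnion, Finset.mem_univ, Finset.mem_filter, true_and, Finset.mem_sdiff,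
      Finset.mem_singleton]
    constructor
    · rintro ⟨j, hj⟩ rfl
      exact pow_ne_zero _ hω0 (hj.symm.trans hz)
    · intro hx
      have : NeZero m := ⟨hm.ne'⟩
      obtain ⟨i, hi, hi'⟩ := hω.eq_pow_of_pow_eq_one (hr x hx)
      exact ⟨⟨i, hi⟩, hi'.symm⟩
  · intro I hI c hc
    have hIc : 0 < I.card := hI.card_pos
    have hc0 : 0 < c := by
      have h1 : (0 : ℤ) < m * c := by
        rw [hc]
        have : (0 : ℤ) < (u : ℤ) - 1 := by omega
        positivity
      exact pos_of_mul_pos_right h1 (by positivity)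
    have hcC : (m : ℂ) * c = I.card * ((u : ℂ) - 1) := by exact_mod_cast hc
    have ind : ∀ f : G → ℂ, ∀ x, (if ∃ j ∈ I, f x = ω ^ (j : ℕ) then (1 : ℂ) else 0) =
        ∑ j ∈ I, if f x = ω ^ (j : ℕ) then (1 : ℂ) else 0 := by
      intro f x
      split_ifs with hx
      · obtain ⟨j, hj, hj'⟩ := hx
        rw [Finset.sum_eq_single j]
        · rw [if_pos hj']
        · intro b _ hb
          rw [if_neg]
          intro h2; exact hb (hinj _ _ (h2.symm.trans hj'))
        · intro h; exact absurd hj h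
      · push Not at hx
        rw [Finset.sum_eq_zero]
        intro j hj; rw [if_neg (hx j hj)]
    refine X.srg hu _ ?_ ?_ c hc0 (fun y => if ∃ j ∈ I, h' y = ω ^ (j : ℕ) then (1 : ℂ) else 0)
      ?_ ?_
    · simp only [Finset.mem_biUnion, Finset.mem_filter, Finset.mem_univ, true_and, hz, not_exists,
        not_and]
      intro j _
      exact (pow_ne_zero _ hω0).symm
    · intro g hg
      simpa [hh, X.neg_a, X.neg_b] using hg
    · intro y
      split_ifs <;> simp
    · intro y
      apply mul_left_cancel₀ hmC
      simp only [Finset.mem_biUnion, Finset.mem_filter, Finset.mem_univ, true_and]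
      simp_rw [ind h, ind h', Finset.sum_mul]
      rw [Finset.sum_comm, Finset.mul_sum, Finset.sum_congr rfl (fun j _ => hTj j y)]
      split_ifs with hy
      · rw [Finset.sum_const, nsmul_eq_mul]
        linear_combination -(u + 1 : ℂ) * hcC
      · rw [Finset.sum_sub_distrib, ← Finset.mul_sum, Finset.sum_const, nsmul_eq_mul]
        linear_combination - hcC


theorem stmt_17 (m s : ℕ) (hm : 0 < m) (hs : 0 < s)
    (q : Fin s → ℕ) (hq : ∀ i, IsPrimePow (q i)) (hdvd : ∀ i, 2 * m ∣ q i + 1)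
    (F : Fin s → Type*) [∀ i, Field (F i)] [∀ i, Fintype (F i)]
    (hcard : ∀ i, Fintype.card (F i) = q i ^ 4)
    (u : ℕ) (hu : u = ∏ i, q i ^ 2) :
    ∃ D : Fin m → Finset (∀ i, F i),
      (∀ j, (0 : ∀ i, F i) ∉ D j) ∧
      (∀ j, ∀ g ∈ D j, -g ∈ D j) ∧
      (∀ j j', j ≠ j' → Disjoint (D j) (D j')) ∧
      (Finset.univ.biUnion D = Finset.univ \ {0}) ∧
      (∀ I : Finset (Fin m), I.Nonempty → ∀ c : ℤ, (m : ℤ) * c = I.card * ((u : ℤ) - 1) →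
        ∃ k l μ : ℕ,
          (SimpleGraph.fromRel fun a b : ∀ i, F i => a - b ∈ I.biUnion D).IsSRGWith
            (u ^ 2) k l μ ∧
          (k : ℤ) = c * ((u : ℤ) + 1) ∧
          (l : ℤ) = -(u : ℤ) + c ^ 2 + 3 * c ∧
          (μ : ℤ) = c ^ 2 + c) := by
  have hX : Nonempty (Blk m (∏ i, q i ^ 2) (∀ i, F i)) :=
    Blk.pi hm s F (fun i => q i ^ 2)
      (fun i => blk_field m (q i) hm (hq i) (hdvd i) (F i) (hcard i))
  rw [← hu] at hX
  obtain ⟨X⟩ := hX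
  have hu1 : 1 < u := by
    rw [hu]
    have : ∀ i, 1 < q i ^ 2 := fun i => Nat.one_lt_pow (by norm_num) (hq i).one_lt
    have h1 : q ⟨0, hs⟩ ^ 2 ∣ ∏ i, q i ^ 2 :=
      Finset.dvd_prod_of_mem (fun i => q i ^ 2) (Finset.mem_univ _)
    have h2 : 0 < ∏ i, q i ^ 2 :=
      Finset.prod_pos (fun i _ => lt_trans zero_lt_one (this i))
    exact lt_of_lt_of_le (this _) (Nat.le_of_dvd h2 h1)
  obtain ⟨D, h1, h2, h3, h4, h5⟩ := Blk.final hm hu1 X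
  refine ⟨D, h1, h2, h3, ?_, ?_⟩
  · convert h4
  · intro I hI c hc
    obtain ⟨k, l, μ, h6, h7⟩ := h5 I hI c hc
    refine ⟨k, l, μ, ?_, h7⟩
    convert h6
end
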